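/- arXiv:1603.06904 — 8 statements merged into one kernel-verified Lean document; each statement's English description precedes it below -/
import Mathlib

section
/- Let λ, q, c > 0, σ ≥ 0 and r ∈ (0,1], and let f be a probability density on (0,∞) (f : ℝ → ℝ measurable, nonnegative, vanishing on (−∞,0], with ∫_0^∞ f(x) dx = 1). Then the generalized Lundberg equation (σ²/2)s² + c s − (λ + q) + λ r f̂(s) = 0 has exactly one root s in [0,∞), and this root is strictly positive. -/
open MeasureTheory

/-- Laplace transform of a function vanishing on `(-∞, 0]`. -/
noncomputable def laplace (f : ℝ → ℝ) (s : ℝ) : ℝ :=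
  ∫ x in Set.Ioi (0 : ℝ), Real.exp (-s * x) * f x

theorem laplace_integrable_aux (f : ℝ → ℝ) (hf_meas : Measurable f)
    (hf_int : IntegrableOn f (Set.Ioi 0)) (s : ℝ) (hs : 0 ≤ s) :
    IntegrableOn (fun x => Real.exp (-s * x) * f x) (Set.Ioi 0) := by
  refine Integrable.mono hf_int (by fun_prop) ?_
  filter_upwards [ae_restrict_mem measurableSet_Ioi] with x hx
  have hx' : 0 < x := hx
  rw [norm_mul, Real.norm_eq_abs, Real.abs_exp]
  have : Real.exp (-s * x) ≤ 1 := Real.exp_le_one_iff.mpr (by nlinarith [mul_nonneg hs hx'.le])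
  exact mul_le_of_le_one_left (norm_nonneg _) this

theorem laplace_convex_aux (f : ℝ → ℝ) (hf_meas : Measurable f) (hf_nonneg : ∀ x, 0 ≤ f x)
    (hf_int : IntegrableOn f (Set.Ioi 0))
    (hf_one : ∫ x in Set.Ioi (0 : ℝ), f x = 1) (b t : ℝ) (hb : 0 ≤ b) (h0 : 0 ≤ t)
    (h1 : t ≤ 1) : laplace f (t * b) ≤ (1 - t) + t * laplace f b := by
  have hib := laplace_integrable_aux f hf_meas hf_int b hb
  have hit := laplace_integrable_aux f hf_meas hf_int (t * b) (mul_nonneg h0 hb)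
  have e : (1 - t) + t * laplace f b
      = ∫ x in Set.Ioi (0 : ℝ), ((1 - t) * f x + t * (Real.exp (-b * x) * f x)) := by
    rw [integral_add (hf_int.const_mul _) (hib.const_mul _), integral_const_mul,
      integral_const_mul, hf_one, laplace, mul_one]
  rw [e, laplace]
  refine integral_mono hit ((hf_int.const_mul _).add (hib.const_mul _)) ?_
  intro x
  have h := convexOn_exp.2 (Set.mem_univ (0 : ℝ)) (Set.mem_univ (-b * x))
    (sub_nonneg.mpr h1) h0 (by ring)
  simp only [smul_eq_mul, mul_zero, zero_add, Real.exp_zero, mul_one] at h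
  have h2 : Real.exp (-(t * b) * x) ≤ 1 - t + t * Real.exp (-b * x) := by
    rw [show -(t * b) * x = t * (-b * x) by ring]
    exact h
  have := mul_le_mul_of_nonneg_right h2 (hf_nonneg x)
  show Real.exp (-(t * b) * x) * f x ≤ (1 - t) * f x + t * (Real.exp (-b * x) * f x)
  linarith

theorem laplace_cont_aux (f : ℝ → ℝ) (hf_meas : Measurable f)
    (hf_int : IntegrableOn f (Set.Ioi 0)) :
    ContinuousOn (laplace f) (Set.Ici 0) := by
  unfold laplace
  refine continuousOn_of_dominated (bound := fun x => ‖f x‖) ?_ ?_ hf_int.norm ?_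
  · intro s _
    fun_prop
  · intro s hs
    have hs' : 0 ≤ s := hs
    filter_upwards [ae_restrict_mem measurableSet_Ioi] with x hx
    have hx' : 0 < x := hx
    rw [norm_mul, Real.norm_eq_abs, Real.abs_exp]
    have : Real.exp (-s * x) ≤ 1 :=
      Real.exp_le_one_iff.mpr (by nlinarith [mul_nonneg hs' hx'.le])
    exact mul_le_of_le_one_left (norm_nonneg _) this
  · refine Filter.Eventually.of_forall fun x => ?_
    fun_prop

/-- The generalized Lundberg equation has exactly one root in `[0, ∞)`,
and this root is strictly positive. -/
theorem lundberg_unique_positive_root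
    (lam q c σ r : ℝ) (hlam : 0 < lam) (hq : 0 < q) (hc : 0 < c)
    (hσ : 0 ≤ σ) (hr : r ∈ Set.Ioc (0 : ℝ) 1)
    (f : ℝ → ℝ) (hf_meas : Measurable f) (hf_nonneg : ∀ x, 0 ≤ f x)
    (hf_zero : ∀ x ≤ 0, f x = 0)
    (hf_int : IntegrableOn f (Set.Ioi 0))
    (hf_one : ∫ x in Set.Ioi (0 : ℝ), f x = 1) :
    ∃ s : ℝ, 0 < s ∧
      σ ^ 2 / 2 * s ^ 2 + c * s - (lam + q) + lam * r * laplace f s = 0 ∧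
      ∀ s' : ℝ, 0 ≤ s' →
        σ ^ 2 / 2 * s' ^ 2 + c * s' - (lam + q) + lam * r * laplace f s' = 0 →
        s' = s := by
  obtain ⟨hr0, hr1⟩ := hr
  have hconv := laplace_convex_aux f hf_meas hf_nonneg hf_int hf_one
  have hL0 : laplace f 0 = 1 := by simp [laplace, hf_one]
  have hLnn : ∀ s, 0 ≤ laplace f s := fun s =>
    integral_nonneg fun x => mul_nonneg (Real.exp_pos _).le (hf_nonneg x)
  have hlr : 0 < lam * r := mul_pos hlam hr0
  have hlr1 : lam * r ≤ lam := mul_le_of_le_one_right hlam.le hr1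
  set G : ℝ → ℝ := fun s =>
    σ ^ 2 / 2 * s ^ 2 + c * s - (lam + q) + lam * r * laplace f s with hG
  have hG0 : G 0 < 0 := by
    simp only [hG, hL0]; nlinarith
  have key : ∀ a b : ℝ, 0 ≤ a → a < b → G b = 0 → G a < 0 := by
    intro a b ha hab hb
    have hb0 : 0 < b := lt_of_le_of_lt ha hab
    have ht0 : 0 ≤ a / b := div_nonneg ha hb0.le
    have ht1 : a / b < 1 := (div_lt_one hb0).mpr hab
    have hat : a = a / b * b := by field_simp
    generalize a / b = t at ht0 ht1 hat
    have h := mul_le_mul_of_nonneg_left (hconv b t hb0.le ht0 ht1.le) hlr.le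
    simp only [hG] at hb ⊢
    rw [hat]
    have h2 : σ ^ 2 / 2 * (t * b) ^ 2 ≤ t * (σ ^ 2 / 2 * b ^ 2) := by
      have h3 : 0 ≤ σ ^ 2 / 2 * b ^ 2 := by positivity
      have h4 : 0 ≤ t * (1 - t) * (σ ^ 2 / 2 * b ^ 2) :=
        mul_nonneg (mul_nonneg ht0 (by linarith)) h3
      linarith
    have h5 : 0 < (1 - t) * (lam + q - lam * r) := mul_pos (by linarith) (by linarith)
    have h6 := congrArg (fun z => t * z) hb
    simp only [mul_zero] at h6
    linarith
  have hM : 0 ≤ (lam + q) / c := by positivity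
  have hGM : 0 ≤ G ((lam + q) / c) := by
    have h1 : c * ((lam + q) / c) = lam + q := by field_simp
    have h2 := mul_nonneg hlr.le (hLnn ((lam + q) / c))
    have h3 : 0 ≤ σ ^ 2 / 2 * ((lam + q) / c) ^ 2 := by positivity
    simp only [hG]
    linarith
  have hcont : ContinuousOn G (Set.Icc 0 ((lam + q) / c)) := by
    have := (laplace_cont_aux f hf_meas hf_int).mono
      (Set.Icc_subset_Ici_self : Set.Icc 0 ((lam + q) / c) ⊆ _)
    simp only [hG]
    fun_prop
  obtain ⟨s, hs, hGs⟩ := intermediate_value_Icc hM hcont ⟨hG0.le, hGM⟩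
  refine ⟨s, lt_of_le_of_ne hs.1 ?_, hGs, ?_⟩
  · rintro rfl
    exact hG0.ne hGs
  · intro s' hs' h'
    rcases lt_trichotomy s' s with h | h | h
    · exact absurd h' (key s' s hs' h hGs).ne
    · exact h
    · exact absurd hGs (key s s' hs.1 h h').ne
end

section
/- Let f : ℝ → ℝ be measurable with ∫_0^∞ |f(x)| dx < ∞ and f vanishing on (−∞,0], and let r, s ≥ 0 with r ≠ s. Then for every x ≥ 0, T_s T_r f(x) = T_r T_s f(x) = (T_s f(x) − T_r f(x)) / (r − s), where T_r f(x) = ∫_x^∞ e^{−r(u−x)} f(u) du is the Dickson–Hipp operator. -/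
open MeasureTheory

/-- The Dickson–Hipp operator `T_r g(x) = ∫_x^∞ e^{-r(u-x)} g(u) du`. -/
noncomputable def dickson (r : ℝ) (g : ℝ → ℝ) (x : ℝ) : ℝ :=
  ∫ u in Set.Ioi x, Real.exp (-r * (u - x)) * g u

lemma dk_inner (r s x v : ℝ) (hrs : r ≠ s) (hv : x < v) :
    ∫ u in Set.Ioi x, (Set.Iio v).indicator
      (fun u => Real.exp (-s * (u - x)) * Real.exp (-r * (v - u))) u
      = (Real.exp (-s * (v - x)) - Real.exp (-r * (v - x))) / (r - s) := by
  have h0 : r - s ≠ 0 := sub_ne_zero.mpr hrs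
  rw [setIntegral_indicator measurableSet_Iio, Set.Ioi_inter_Iio, ← integral_Ioc_eq_integral_Ioo,
    ← intervalIntegral.integral_of_le hv.le]
  have hd : ∀ u ∈ Set.uIcc x v, HasDerivAt
      (fun u => Real.exp (-s * (u - x) + -r * (v - u)) / (r - s))
      (Real.exp (-s * (u - x)) * Real.exp (-r * (v - u))) u := by
    intro u _
    have h1 : HasDerivAt (fun u : ℝ => -s * (u - x) + -r * (v - u)) (r - s) u := by
      have := (((hasDerivAt_id u).sub_const x).const_mul (-s)).add
        (((hasDerivAt_id u).const_sub v).const_mul (-r))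
      exact this.congr_deriv (by ring)
    have h2 := (h1.exp).div_const (r - s)
    refine h2.congr_deriv ?_
    rw [Real.exp_add]
    field_simp
  rw [intervalIntegral.integral_eq_sub_of_hasDerivAt hd
    (Continuous.intervalIntegrable (by fun_prop) _ _)]
  simp
  ring

lemma dk_inner_int (r s x v : ℝ) :
    IntegrableOn ((Set.Iio v).indicator
      (fun u => Real.exp (-s * (u - x)) * Real.exp (-r * (v - u)))) (Set.Ioi x) := by
  rw [IntegrableOn, integrable_indicator_iff measurableSet_Iio, IntegrableOn,
    Measure.restrict_restrict measurableSet_Iio]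
  have : IntegrableOn (fun u => Real.exp (-s * (u - x)) * Real.exp (-r * (v - u)))
      (Set.Icc x v) := Continuous.integrableOn_Icc (by fun_prop)
  exact this.mono_set (fun u hu => ⟨le_of_lt hu.2, le_of_lt hu.1⟩)

lemma dk_exp_int (f : ℝ → ℝ) (x : ℝ) (hf : IntegrableOn f (Set.Ioi x)) (r : ℝ) (hr : 0 ≤ r) :
    IntegrableOn (fun v => Real.exp (-r * (v - x)) * f v) (Set.Ioi x) := by
  refine Integrable.bdd_mul (c := 1) hf (by fun_prop) ?_
  filter_upwards [ae_restrict_mem measurableSet_Ioi] with v hv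
  rw [Real.norm_eq_abs, Real.abs_exp, Real.exp_le_one_iff]
  have : 0 < v - x := sub_pos.mpr hv
  nlinarith [mul_nonneg hr this.le]

lemma dk_main (f : ℝ → ℝ) (hm : Measurable f) (x : ℝ) (hf : IntegrableOn f (Set.Ioi x))
    (r s : ℝ) (hr : 0 ≤ r) (hs : 0 ≤ s) (hrs : r ≠ s) :
    dickson s (dickson r f) x = (dickson s f x - dickson r f x) / (r - s) := by
  set k : ℝ → ℝ → ℝ := fun u v => (Set.Iio v).indicator
      (fun u => Real.exp (-s * (u - x)) * Real.exp (-r * (v - u))) u with hk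
  have hk0 : ∀ u v, 0 ≤ k u v := fun u v =>
    Set.indicator_nonneg (fun _ _ => by positivity) _
  have hkm : Measurable (fun p : ℝ × ℝ => k p.1 p.2) := by
    have : (fun p : ℝ × ℝ => k p.1 p.2) = {p : ℝ × ℝ | p.1 < p.2}.indicator
        (fun p => Real.exp (-s * (p.1 - x)) * Real.exp (-r * (p.2 - p.1))) := by
      funext p
      simp [hk, Set.indicator_apply]
    rw [this]
    exact Measurable.indicator (by fun_prop) (measurableSet_lt measurable_fst measurable_snd)
  have hK : IntegrableOn (fun v => (Real.exp (-s * (v - x)) - Real.exp (-r * (v - x))) / (r - s)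
      * f v) (Set.Ioi x) := by
    have := ((dk_exp_int f x hf s hs).sub (dk_exp_int f x hf r hr)).div_const (r - s)
    refine this.congr (Filter.Eventually.of_forall fun v => ?_)
    simp only [Pi.sub_apply]
    ring
  have hI : Integrable (fun p : ℝ × ℝ => k p.1 p.2 * f p.2)
      ((volume.restrict (Set.Ioi x)).prod (volume.restrict (Set.Ioi x))) := by
    rw [integrable_prod_iff' (by
      exact (hkm.mul (hm.comp measurable_snd)).aestronglyMeasurable)]
    refine ⟨Filter.Eventually.of_forall fun v => (dk_inner_int r s x v).mul_const (f v), ?_⟩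
    refine hK.norm.congr ?_
    filter_upwards [ae_restrict_mem measurableSet_Ioi] with v hv
    have e := dk_inner r s x v hrs hv
    have hn : 0 ≤ (Real.exp (-s * (v - x)) - Real.exp (-r * (v - x))) / (r - s) := by
      rw [← e]
      exact integral_nonneg fun u => hk0 u v
    rw [norm_mul, Real.norm_of_nonneg hn, ← e, ← integral_mul_const]
    refine integral_congr_ae (Filter.Eventually.of_forall fun u => ?_)
    simp only [norm_mul]
    rw [Real.norm_of_nonneg (hk0 u v)]
  have hsw := integral_integral_swap (f := fun u v => k u v * f v) hI
  have hL : dickson s (dickson r f) x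
      = ∫ u in Set.Ioi x, ∫ v in Set.Ioi x, k u v * f v := by
    unfold dickson
    refine setIntegral_congr_fun measurableSet_Ioi fun u hu => ?_
    have h1 : (fun v => k u v * f v) = (Set.Ioi u).indicator
        (fun v => Real.exp (-s * (u - x)) * (Real.exp (-r * (v - u)) * f v)) := by
      funext v
      by_cases h : u < v <;> simp [hk, Set.indicator_apply, h, mul_assoc]
    simp only [h1]
    rw [setIntegral_indicator measurableSet_Ioi, Set.inter_eq_right.mpr
      (Set.Ioi_subset_Ioi (le_of_lt hu)), integral_const_mul]
  rw [hL, hsw]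
  unfold dickson
  rw [← integral_sub (dk_exp_int f x hf s hs) (dk_exp_int f x hf r hr), ← integral_div]
  refine setIntegral_congr_fun measurableSet_Ioi fun v hv => ?_
  rw [integral_mul_const, dk_inner r s x v hrs hv]
  ring

/-- Commutativity and resolvent-type identity for the Dickson–Hipp operator. -/
theorem dickson_comm_resolvent
    (f : ℝ → ℝ) (hf_meas : Measurable f) (hf_zero : ∀ x ≤ 0, f x = 0)
    (hf_int : IntegrableOn f (Set.Ioi 0))
    (r s : ℝ) (hr : 0 ≤ r) (hs : 0 ≤ s) (hrs : r ≠ s)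
    (x : ℝ) (hx : 0 ≤ x) :
    dickson s (dickson r f) x = dickson r (dickson s f) x ∧
    dickson s (dickson r f) x = (dickson s f x - dickson r f x) / (r - s) := by
  have hf := hf_int.mono_set (Set.Ioi_subset_Ioi hx)
  have h1 := dk_main f hf_meas x hf r s hr hs hrs
  have h2 := dk_main f hf_meas x hf s r hs hr hrs.symm
  refine ⟨?_, h1⟩
  rw [h1, h2, ← neg_sub s r, div_neg, ← neg_div, neg_sub]
end

section
/- Let k, φ : ℝ → ℝ be measurable functions vanishing on (−∞,0] that are bounded on every compact interval. Then for every x ≥ 0 the series ξ(x) := φ(x) + Σ_{n=1}^∞ (k^{*n} * φ)(x) converges absolutely, and the resulting function ξ satisfies the renewal (Volterra convolution) equation ξ(x) = ∫_0^x k(x − y) ξ(y) dy + φ(x) for every x ≥ 0. -/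
open MeasureTheory

/-- Convolution of functions vanishing on `(-∞, 0]`:
`(g * h)(x) = ∫_0^x g(x-y) h(y) dy`. -/
noncomputable def conv (g h : ℝ → ℝ) (x : ℝ) : ℝ :=
  ∫ y in (0 : ℝ)..x, g (x - y) * h y

/-- `nconv g n = g^{*(n+1)}`, the `(n+1)`-fold convolution of `g` with itself
(so that `nconv g 0 = g^{*1} = g`). -/
noncomputable def nconv (g : ℝ → ℝ) : ℕ → ℝ → ℝ
  | 0 => g
  | n + 1 => conv g (nconv g n)

structure GoodFn (f : ℝ → ℝ) : Prop where
  meas : Measurable f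
  zero : ∀ u ≤ 0, f u = 0
  bdd : ∀ a b : ℝ, ∃ M : ℝ, ∀ u ∈ Set.Icc a b, |f u| ≤ M

theorem GoodFn.bdd' {f : ℝ → ℝ} (hf : GoodFn f) (T : ℝ) :
    ∃ M : ℝ, 0 ≤ M ∧ ∀ u ≤ T, |f u| ≤ M := by
  obtain ⟨M, hM⟩ := hf.bdd 0 T
  refine ⟨max M 0, le_max_right _ _, fun u hu => ?_⟩
  rcases le_total u 0 with h | h
  · rw [hf.zero u h]; simp
  · exact (hM u ⟨h, hu⟩).trans (le_max_left _ _)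

theorem conv_eq_full {g h : ℝ → ℝ} (hg : ∀ u ≤ 0, g u = 0) (hh : ∀ u ≤ 0, h u = 0) (x : ℝ) :
    conv g h x = ∫ y, g (x - y) * h y := by
  unfold conv
  rcases le_total 0 x with hx | hx
  · rw [intervalIntegral.integral_of_le hx]
    apply setIntegral_eq_integral_of_forall_compl_eq_zero
    intro y hy
    by_cases h0 : y ≤ 0
    · rw [hh y h0, mul_zero]
    · have : x - y ≤ 0 := by
        by_contra hc
        exact hy ⟨by linarith, by linarith⟩
      rw [hg _ this, zero_mul]
  · have h1 : ∀ y, g (x - y) * h y = 0 := by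
      intro y
      rcases le_total y 0 with h0 | h0
      · rw [hh y h0, mul_zero]
      · rw [hg _ (by linarith), zero_mul]
    simp [h1]

theorem conv_zero {g h : ℝ → ℝ} (hg : ∀ u ≤ 0, g u = 0) (hh : ∀ u ≤ 0, h u = 0) :
    ∀ u ≤ 0, conv g h u = 0 := by
  intro x hx
  rw [conv_eq_full hg hh]
  have h1 : ∀ y, g (x - y) * h y = 0 := by
    intro y
    rcases le_total y 0 with h0 | h0
    · rw [hh y h0, mul_zero]
    · rw [hg _ (by linarith), zero_mul]
  simp [h1]

theorem GoodFn.conv {g h : ℝ → ℝ} (hg : GoodFn g) (hh : GoodFn h) : GoodFn (conv g h) := by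
  refine ⟨?_, conv_zero hg.zero hh.zero, ?_⟩
  · have : _root_.conv g h = fun x => ∫ y, g (x - y) * h y := by
      funext x; exact conv_eq_full hg.zero hh.zero x
    rw [this]
    have hm : Measurable (fun p : ℝ × ℝ => g (p.1 - p.2) * h p.2) :=
      (hg.meas.comp (measurable_fst.sub measurable_snd)).mul (hh.meas.comp measurable_snd)
    exact (hm.stronglyMeasurable.integral_prod_right (ν := volume)).measurable
  · intro a b
    obtain ⟨M, hM0, hM⟩ := hg.bdd' b
    obtain ⟨N, hN0, hN⟩ := hh.bdd' b
    refine ⟨M * N * |b|, fun u hu => ?_⟩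
    rcases le_total u 0 with h0 | h0
    · rw [conv_zero hg.zero hh.zero u h0]; simp; positivity
    · have := intervalIntegral.norm_integral_le_of_norm_le_const (a := 0) (b := u)
        (f := fun y => g (u - y) * h y) (C := M * N) (by
          intro y hy
          rw [Set.uIoc_of_le h0] at hy
          rw [norm_mul]
          exact mul_le_mul (hM _ (by linarith [hy.1, hu.2])) (hN _ (by linarith [hy.2, hu.2]))
            (norm_nonneg _) hM0)
      refine this.trans ?_
      have : |u - 0| ≤ |b| := by
        rw [sub_zero, abs_of_nonneg h0]; exact hu.2.trans (le_abs_self b)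
      gcongr

theorem conv_assoc' {f g h : ℝ → ℝ} (hf : GoodFn f) (hg : GoodFn g) (hh : GoodFn h) :
    conv (conv f g) h = conv f (conv g h) := by
  funext x
  rw [conv_eq_full (hf.conv hg).zero hh.zero, conv_eq_full hf.zero (hg.conv hh).zero]
  have e1 : ∀ z, conv f g (x - z) * h z = ∫ y, f (x - y) * g (y - z) * h z := by
    intro z
    rw [conv_eq_full hf.zero hg.zero, integral_mul_const]
    congr 1
    rw [← integral_sub_right_eq_self (fun y => f (x - z - y) * g y) z]
    congr 1; funext y; congr 2; ring
  have e2 : ∀ y, f (x - y) * conv g h y = ∫ z, f (x - y) * g (y - z) * h z := by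
    intro y
    rw [conv_eq_full hg.zero hh.zero, ← integral_const_mul]
    congr 1; funext z; ring
  simp_rw [e1, e2]
  apply integral_integral_swap
  obtain ⟨A, hA0, hA⟩ := hf.bdd' x
  obtain ⟨B, hB0, hB⟩ := hg.bdd' x
  obtain ⟨C, hC0, hC⟩ := hh.bdd' x
  have hm : Measurable (fun p : ℝ × ℝ => f (x - p.2) * g (p.2 - p.1) * h p.1) :=
    ((hf.meas.comp (measurable_const.sub measurable_snd)).mul
      (hg.meas.comp (measurable_snd.sub measurable_fst))).mul (hh.meas.comp measurable_fst)
  have hsupp : ∀ p : ℝ × ℝ, p ∉ Set.Icc (0 : ℝ) x ×ˢ Set.Icc (0 : ℝ) x →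
      f (x - p.2) * g (p.2 - p.1) * h p.1 = 0 := by
    intro p hp
    by_contra hne
    have h1 : 0 < x - p.2 := by
      by_contra hc; exact hne (by rw [hf.zero _ (not_lt.1 hc)]; ring)
    have h2 : 0 < p.2 - p.1 := by
      by_contra hc; exact hne (by rw [hg.zero _ (not_lt.1 hc)]; ring)
    have h3 : 0 < p.1 := by
      by_contra hc; exact hne (by rw [hh.zero _ (not_lt.1 hc)]; ring)
    exact hp ⟨⟨by linarith, by linarith⟩, ⟨by linarith, by linarith⟩⟩
  have hfin : IntegrableOn (fun p : ℝ × ℝ => f (x - p.2) * g (p.2 - p.1) * h p.1)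
      (Set.Icc (0 : ℝ) x ×ˢ Set.Icc (0 : ℝ) x) (volume.prod volume) := by
    apply Measure.integrableOn_of_bounded (M := A * B * C)
    · exact ((isCompact_Icc.prod isCompact_Icc).measure_lt_top (μ := (volume.prod volume))).ne
    · exact hm.aestronglyMeasurable
    · filter_upwards [ae_restrict_mem (measurableSet_Icc.prod measurableSet_Icc)] with p hp
      obtain ⟨⟨h1, h2⟩, ⟨h3, h4⟩⟩ := hp
      rw [norm_mul, norm_mul]
      exact mul_le_mul (mul_le_mul (hA _ (by linarith)) (hB _ (by linarith))
        (norm_nonneg _) hA0) (hC _ h2) (norm_nonneg _) (by positivity)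
  exact (integrableOn_iff_integrable_of_support_subset
    (fun p hp => by by_contra hc; exact hp (hsupp p hc))).1 hfin

noncomputable def iter (k φ : ℝ → ℝ) : ℕ → ℝ → ℝ
  | 0 => φ
  | n + 1 => conv k (iter k φ n)

theorem iter_good {k φ : ℝ → ℝ} (hk : GoodFn k) (hφ : GoodFn φ) (n : ℕ) :
    GoodFn (iter k φ n) := by
  induction n with
  | zero => exact hφ
  | succ n ih => exact hk.conv ih

theorem nconv_good {k : ℝ → ℝ} (hk : GoodFn k) (n : ℕ) : GoodFn (nconv k n) := by
  induction n with
  | zero => exact hk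
  | succ n ih => exact hk.conv ih

theorem conv_nconv {k φ : ℝ → ℝ} (hk : GoodFn k) (hφ : GoodFn φ) (n : ℕ) :
    conv (nconv k n) φ = iter k φ (n + 1) := by
  induction n with
  | zero => rfl
  | succ n ih =>
    change conv (conv k (nconv k n)) φ = conv k (iter k φ (n + 1))
    rw [conv_assoc' hk (nconv_good hk n) hφ, ih]

theorem iter_bound {k φ : ℝ → ℝ} {T M C : ℝ} (hM0 : 0 ≤ M)
    (hM : ∀ u ≤ T, |k u| ≤ M) (hC : ∀ u ≤ T, |φ u| ≤ C) (n : ℕ) :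
    ∀ x, 0 ≤ x → x ≤ T → |iter k φ n x| ≤ C * ((M * x) ^ n / n.factorial) := by
  induction n with
  | zero => intro x _ hx; simpa [iter] using hC x hx
  | succ n ih =>
    intro x hx hxT
    have h := intervalIntegral.norm_integral_le_of_norm_le (a := 0) (b := x) (μ := volume)
      (f := fun y => k (x - y) * iter k φ n y)
      (g := fun y => (M * C * M ^ n / n.factorial) * y ^ n) hx
      (by
        refine Filter.Eventually.of_forall fun y hy => ?_
        rw [norm_mul]
        have := mul_le_mul (hM (x - y) (by linarith [hy.1]))
          (ih y hy.1.le (hy.2.trans hxT)) (abs_nonneg _) hM0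
        refine this.trans (le_of_eq ?_)
        rw [mul_pow]; ring)
      (Continuous.intervalIntegrable (by fun_prop) _ _)
    refine h.trans (le_of_eq ?_)
    rw [intervalIntegral.integral_const_mul, integral_pow, Nat.factorial_succ]
    push_cast
    have : (n.factorial : ℝ) ≠ 0 := by positivity
    have : (n : ℝ) + 1 ≠ 0 := by positivity
    field_simp
    simp
    ring

/-- The Neumann series `ξ = φ + Σ_{n≥1} k^{*n} * φ` converges absolutely at every
`x ≥ 0` and solves the renewal (Volterra convolution) equation
`ξ(x) = ∫_0^x k(x-y) ξ(y) dy + φ(x)`. -/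
theorem neumann_series_solves_renewal_equation
    (k φ : ℝ → ℝ) (hk_meas : Measurable k) (hφ_meas : Measurable φ)
    (hk_zero : ∀ u ≤ 0, k u = 0) (hφ_zero : ∀ u ≤ 0, φ u = 0)
    (hk_bdd : ∀ a b : ℝ, ∃ M : ℝ, ∀ u ∈ Set.Icc a b, |k u| ≤ M)
    (hφ_bdd : ∀ a b : ℝ, ∃ M : ℝ, ∀ u ∈ Set.Icc a b, |φ u| ≤ M) :
    (∀ x, 0 ≤ x → Summable fun n : ℕ => |conv (nconv k n) φ x|) ∧
    (∀ x, 0 ≤ x →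
      φ x + (∑' n : ℕ, conv (nconv k n) φ x)
        = (∫ y in (0 : ℝ)..x,
            k (x - y) * (φ y + ∑' n : ℕ, conv (nconv k n) φ y)) + φ x) := by
  have hk : GoodFn k := ⟨hk_meas, hk_zero, hk_bdd⟩
  have hφ : GoodFn φ := ⟨hφ_meas, hφ_zero, hφ_bdd⟩
  simp_rw [conv_nconv hk hφ]
  have hsum : ∀ x, 0 ≤ x → Summable fun n : ℕ => |iter k φ n x| := by
    intro x hx
    obtain ⟨M, hM0, hM⟩ := hk.bdd' x
    obtain ⟨C, hC0, hC⟩ := hφ.bdd' x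
    exact Summable.of_nonneg_of_le (fun _ => abs_nonneg _)
      (fun n => iter_bound hM0 hM hC n x hx le_rfl)
      ((Real.summable_pow_div_factorial (M * x)).mul_left C)
  refine ⟨fun x hx => (summable_nat_add_iff 1).2 (hsum x hx), fun x hx => ?_⟩
  rw [add_comm]
  congr 1
  obtain ⟨M, hM0, hM⟩ := hk.bdd' x
  obtain ⟨C, hC0, hC⟩ := hφ.bdd' x
  have key := intervalIntegral.hasSum_integral_of_dominated_convergence (a := 0) (b := x)
    (μ := volume)
    (F := fun n y => k (x - y) * iter k φ n y)
    (f := fun y => k (x - y) * (φ y + ∑' n : ℕ, iter k φ (n + 1) y))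
    (fun n _ => M * (C * ((M * x) ^ n / n.factorial)))
    (fun n => ((hk.meas.comp (measurable_const.sub measurable_id)).mul
      (iter_good hk hφ n).meas).aestronglyMeasurable)
    (by
      intro n
      refine Filter.Eventually.of_forall fun y hy => ?_
      rw [Set.uIoc_of_le hx] at hy
      rw [norm_mul]
      refine mul_le_mul (hM (x - y) (by linarith [hy.1])) ?_ (norm_nonneg _) hM0
      refine (iter_bound hM0 hM hC n y hy.1.le hy.2).trans ?_
      have := hy.1.le
      have := hy.2
      gcongr)
    (Filter.Eventually.of_forall fun y _ =>
      ((Real.summable_pow_div_factorial (M * x)).mul_left C).mul_left M)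
    intervalIntegrable_const
    (by
      refine Filter.Eventually.of_forall fun y hy => ?_
      rw [Set.uIoc_of_le hx] at hy
      have hs := (hsum y hy.1.le).of_abs
      have := hs.hasSum.mul_left (k (x - y))
      rwa [hs.tsum_eq_zero_add] at this)
  exact key.tsum_eq
end

section
/- Let k, φ : ℝ → ℝ be measurable functions vanishing on (−∞,0] that are bounded on every compact interval. If ξ₁, ξ₂ : ℝ → ℝ are measurable, vanish on (−∞,0], are bounded on every compact interval, and both satisfy ξᵢ(x) = ∫_0^x k(x − y) ξᵢ(y) dy + φ(x) for all x ≥ 0, then ξ₁(x) = ξ₂(x) for all x. -/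
open MeasureTheory

/-- Uniqueness of locally bounded measurable solutions of the renewal
(Volterra convolution) equation `ξ(x) = ∫_0^x k(x-y) ξ(y) dy + φ(x)`. -/
theorem renewal_equation_unique_solution
    (k φ ξ₁ ξ₂ : ℝ → ℝ)
    (hk_meas : Measurable k) (hφ_meas : Measurable φ)
    (hk_zero : ∀ u ≤ 0, k u = 0) (hφ_zero : ∀ u ≤ 0, φ u = 0)
    (hk_bdd : ∀ a b : ℝ, ∃ M : ℝ, ∀ u ∈ Set.Icc a b, |k u| ≤ M)
    (hφ_bdd : ∀ a b : ℝ, ∃ M : ℝ, ∀ u ∈ Set.Icc a b, |φ u| ≤ M)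
    (hξ₁_meas : Measurable ξ₁) (hξ₂_meas : Measurable ξ₂)
    (hξ₁_zero : ∀ u ≤ 0, ξ₁ u = 0) (hξ₂_zero : ∀ u ≤ 0, ξ₂ u = 0)
    (hξ₁_bdd : ∀ a b : ℝ, ∃ M : ℝ, ∀ u ∈ Set.Icc a b, |ξ₁ u| ≤ M)
    (hξ₂_bdd : ∀ a b : ℝ, ∃ M : ℝ, ∀ u ∈ Set.Icc a b, |ξ₂ u| ≤ M)
    (h₁ : ∀ x, 0 ≤ x → ξ₁ x = (∫ y in (0 : ℝ)..x, k (x - y) * ξ₁ y) + φ x)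
    (h₂ : ∀ x, 0 ≤ x → ξ₂ x = (∫ y in (0 : ℝ)..x, k (x - y) * ξ₂ y) + φ x) :
    ∀ x, ξ₁ x = ξ₂ x := by
  intro T
  rcases le_or_gt T 0 with hT | hT
  · rw [hξ₁_zero T hT, hξ₂_zero T hT]
  obtain ⟨K, hK⟩ := hk_bdd 0 T
  obtain ⟨B₁, hB₁⟩ := hξ₁_bdd 0 T
  obtain ⟨B₂, hB₂⟩ := hξ₂_bdd 0 T
  have hK0 : 0 ≤ K := (abs_nonneg _).trans (hK 0 ⟨le_rfl, hT.le⟩)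
  have hint : ∀ (ξ : ℝ → ℝ) (B : ℝ), Measurable ξ → (∀ u ∈ Set.Icc 0 T, |ξ u| ≤ B) →
      ∀ x ∈ Set.Icc 0 T, IntervalIntegrable (fun y => k (x - y) * ξ y) volume 0 x := by
    intro ξ B hm hB x hx
    rw [intervalIntegrable_iff_integrableOn_Ioc_of_le hx.1]
    refine Measure.integrableOn_of_bounded (M := K * B) (by simp) ?_ ?_
    · exact ((hk_meas.comp (measurable_const.sub measurable_id)).mul hm).aestronglyMeasurable
    · refine (ae_restrict_iff' measurableSet_Ioc).2 (Filter.Eventually.of_forall ?_)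
      intro y hy
      rw [Real.norm_eq_abs, abs_mul]
      exact mul_le_mul (hK _ ⟨by linarith [hy.2], by linarith [hy.1, hx.2]⟩)
        (hB _ ⟨hy.1.le, hy.2.trans hx.2⟩) (abs_nonneg _) hK0
  have hd : ∀ x ∈ Set.Icc 0 T, ξ₁ x - ξ₂ x = ∫ y in (0 : ℝ)..x, k (x - y) * (ξ₁ y - ξ₂ y) := by
    intro x hx
    have e : (∫ y in (0 : ℝ)..x, k (x - y) * (ξ₁ y - ξ₂ y)) =
        (∫ y in (0 : ℝ)..x, k (x - y) * ξ₁ y) - ∫ y in (0 : ℝ)..x, k (x - y) * ξ₂ y := by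
      rw [← intervalIntegral.integral_sub (hint ξ₁ B₁ hξ₁_meas hB₁ x hx)
        (hint ξ₂ B₂ hξ₂_meas hB₂ x hx)]
      simp only [mul_sub]
    rw [e]
    linarith [h₁ x hx.1, h₂ x hx.1]
  have key : ∀ n : ℕ, ∀ x ∈ Set.Icc 0 T,
      |ξ₁ x - ξ₂ x| ≤ (B₁ + B₂) * (K ^ n / n.factorial) * x ^ n := by
    intro n
    induction n with
    | zero =>
      intro x hx
      simpa using (abs_sub _ _).trans (add_le_add (hB₁ x hx) (hB₂ x hx))
    | succ n ih =>
      intro x hx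
      rw [hd x hx, ← Real.norm_eq_abs]
      refine (intervalIntegral.norm_integral_le_of_norm_le
        (g := fun y => K * ((B₁ + B₂) * (K ^ n / n.factorial)) * y ^ n) hx.1
        (Filter.Eventually.of_forall ?_)
        (Continuous.intervalIntegrable (by fun_prop) _ _)).trans (le_of_eq ?_)
      · intro y hy
        rw [Real.norm_eq_abs, abs_mul, mul_assoc]
        exact mul_le_mul (hK _ ⟨by linarith [hy.2], by linarith [hy.1, hx.2]⟩)
          (ih _ ⟨hy.1.le, hy.2.trans hx.2⟩) (abs_nonneg _) hK0
      · rw [intervalIntegral.integral_const_mul, integral_pow, Nat.factorial_succ]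
        have : (n.factorial : ℝ) ≠ 0 := by positivity
        push_cast
        field_simp
        simp
        ring
  have hlim : Filter.Tendsto (fun n : ℕ => (B₁ + B₂) * ((K * T) ^ n / n.factorial))
      Filter.atTop (nhds 0) := by
    simpa using (FloorSemiring.tendsto_pow_div_factorial_atTop (K * T)).const_mul (B₁ + B₂)
  have h0 : |ξ₁ T - ξ₂ T| ≤ 0 := by
    refine ge_of_tendsto' hlim fun n => (key n T ⟨hT.le, le_rfl⟩).trans (le_of_eq ?_)
    rw [mul_pow]
    ring
  exact sub_eq_zero.1 (abs_nonpos_iff.1 h0)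
end

section
/- Let c > 0, a ∈ ℝ, y ∈ ℝ with a < y, and let J : [0,∞) → ℝ be nondecreasing, right-continuous, with J(0) = 0. Define g(t) = a + c t − J(t) and τ = inf{ t ≥ 0 : g(t) ≥ y }. If the set { t ≥ 0 : g(t) ≥ y } is nonempty, then g(τ) = y; that is, a path with positive drift and only downward (nonincreasing-part) discontinuities can only cross an upper level continuously. -/
/-- A deterministic path with positive drift and only downward (nonincreasing-part)
jumps can only cross an upper level continuously: if `g(t) = a + c t - J(t)` with
`J` nondecreasing and right-continuous on `[0, ∞)`, `J(0) = 0`, `a < y`, and `g`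
reaches the level `y`, then `g` equals `y` at the first passage time. -/
theorem drift_minus_jumps_crosses_level_continuously
    (c a y : ℝ) (hc : 0 < c) (hay : a < y)
    (J : ℝ → ℝ)
    (hJ_mono : MonotoneOn J (Set.Ici 0))
    (hJ_rc : ∀ t, 0 ≤ t → ContinuousWithinAt J (Set.Ici t) t)
    (hJ_zero : J 0 = 0)
    (g : ℝ → ℝ) (hg : ∀ t, g t = a + c * t - J t)
    (hne : {t : ℝ | 0 ≤ t ∧ y ≤ g t}.Nonempty) :
    g (sInf {t : ℝ | 0 ≤ t ∧ y ≤ g t}) = y := by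
  have hbdd : BddBelow {t : ℝ | 0 ≤ t ∧ y ≤ g t} := ⟨0, fun t ht => ht.1⟩
  have h0 : 0 ≤ sInf {t : ℝ | 0 ≤ t ∧ y ≤ g t} := le_csInf hne fun t ht => ht.1
  have hle : ∀ t, 0 ≤ t → y ≤ g t → sInf {t : ℝ | 0 ≤ t ∧ y ≤ g t} ≤ t :=
    fun t h1 h2 => csInf_le hbdd ⟨h1, h2⟩
  have hlt : ∀ r, sInf {t : ℝ | 0 ≤ t ∧ y ≤ g t} < r → ∃ s, (0 ≤ s ∧ y ≤ g s) ∧ s < r :=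
    fun r hr => exists_lt_of_csInf_lt hne hr
  generalize sInf {t : ℝ | 0 ≤ t ∧ y ≤ g t} = τ at *
  have key : ∀ s t, 0 ≤ s → s ≤ t → g t - c * (t - s) ≤ g s := by
    intro s t hs hst
    have := hJ_mono (Set.mem_Ici.2 hs) (Set.mem_Ici.2 (hs.trans hst)) hst
    rw [hg, hg]
    linarith
  apply le_antisymm
  · by_contra! h
    have hd : 0 < (g τ - y) / c := div_pos (by linarith) hc
    have hcd : c * ((g τ - y) / c) = g τ - y := by field_simp
    by_cases hz : 0 ≤ τ - (g τ - y) / c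
    · have h1 := key _ τ hz (by linarith)
      have h2 := hle _ hz (by linarith)
      linarith
    · have h1 := key 0 τ le_rfl h0
      have h2 : c * τ < c * ((g τ - y) / c) := mul_lt_mul_of_pos_left (by linarith) hc
      have h3 := hg 0
      rw [hJ_zero] at h3
      linarith
  · by_contra! h
    have hd : 0 < (y - g τ) / c := div_pos (by linarith) hc
    have hcd : c * ((y - g τ) / c) = y - g τ := by field_simp
    obtain ⟨s, ⟨hs0, hs⟩, hsr⟩ := hlt (τ + (y - g τ) / c) (by linarith)
    have h1 := key τ s h0 (hle s hs0 hs)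
    have h2 : c * (s - τ) < c * ((y - g τ) / c) := mul_lt_mul_of_pos_left (by linarith) hc
    linarith
end

section
/- Let λ, q, c > 0, r ∈ (0,1], let f be a continuous probability density on (0,∞) (vanishing on (−∞,0]), and let ρ be the unique nonnegative root of c s − (λ + q) + λ r f̂(s) = 0. Then for every y > 0, e^{−(λ+q) y / c} + Σ_{k=1}^∞ r^k (λ^k / k!) · y · ∫_{y/c}^∞ e^{−q t} t^{k−1} e^{−λ t} f^{*k}(c t − y) dt = e^{−ρ y}, where f^{*k} is the k-fold convolution of f (extended by 0 on (−∞,0]). -/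
open MeasureTheory

open scoped ENNReal Nat

noncomputable def KM (μ : Measure ℝ) : ℕ → Measure ℝ
  | 0 => Measure.dirac 0
  | n + 1 => Measure.conv μ (KM μ n)

instance KM_prob (μ : Measure ℝ) [IsProbabilityMeasure μ] (n : ℕ) :
    IsProbabilityMeasure (KM μ n) := by
  induction n with
  | zero => unfold KM; infer_instance
  | succ n ih => unfold KM; infer_instance

noncomputable def KH (a b : ℝ) (μ : Measure ℝ) : ℕ → ℝ → ℝ≥0∞
  | 0, y => ENNReal.ofReal (Real.exp (-a * y))
  | n + 1, y => ENNReal.ofReal (b ^ (n + 1) / ((n + 1)! : ℝ) * y) *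
      ∫⁻ z, ENNReal.ofReal (Real.exp (-a * (z + y)) * (z + y) ^ n) ∂(KM μ (n + 1))

noncomputable def KT (a b : ℝ) (μ : Measure ℝ) (phi : ℝ → ℝ≥0∞) (y : ℝ) : ℝ≥0∞ :=
  ENNReal.ofReal b * ∫⁻ u in Set.Ioc 0 y, ENNReal.ofReal (Real.exp (-a * (y - u))) *
    ∫⁻ x, phi (u + x) ∂μ

lemma KH_meas (a b : ℝ) (μ : Measure ℝ) [IsProbabilityMeasure μ] (n : ℕ) :
    Measurable (KH a b μ n) := by
  cases n with
  | zero => unfold KH; fun_prop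
  | succ n => unfold KH; fun_prop

lemma KM_nonneg (μ : Measure ℝ) [IsProbabilityMeasure μ] (hμ : ∀ᵐ x ∂μ, 0 < x) (n : ℕ) :
    ∀ᵐ x ∂(KM μ n), 0 ≤ x := by
  induction n with
  | zero => unfold KM; rw [ae_dirac_iff measurableSet_Ici]
  | succ n ih =>
    unfold KM Measure.conv
    rw [ae_map_iff (by fun_prop) measurableSet_Ici]
    have h1 : ∀ᵐ z ∂(μ.prod (KM μ n)), 0 < z.1 := Measure.quasiMeasurePreserving_fst.ae hμ
    have h2 : ∀ᵐ z ∂(μ.prod (KM μ n)), 0 ≤ z.2 := Measure.quasiMeasurePreserving_snd.ae ih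
    filter_upwards [h1, h2] with z h1 h2 using by positivity

lemma KM_succ_lint (μ : Measure ℝ) [IsProbabilityMeasure μ] (n : ℕ) {phi : ℝ → ℝ≥0∞}
    (hphi : Measurable phi) :
    ∫⁻ s, phi s ∂(KM μ (n+1)) = ∫⁻ x, ∫⁻ z, phi (x + z) ∂(KM μ n) ∂μ := by
  conv_lhs => unfold KM
  exact Measure.lintegral_conv hphi

lemma KM_sym (μ : Measure ℝ) [IsProbabilityMeasure μ] (hμ : ∀ᵐ x ∂μ, 0 < x) (n : ℕ) :
    ∀ phi : ℝ → ℝ≥0∞, Measurable phi →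
    ((n : ℝ≥0∞) + 1) * ∫⁻ x, ENNReal.ofReal x * ∫⁻ z, phi (x + z) ∂(KM μ n) ∂μ
      = ∫⁻ s, ENNReal.ofReal s * phi s ∂(KM μ (n+1)) := by
  induction n with
  | zero =>
    intro phi hphi
    rw [KM_succ_lint μ _ (by fun_prop)]
    simp [KM]
  | succ n ih =>
    intro phi hphi
    rw [KM_succ_lint μ _ (by fun_prop)]
    have e1 : ∫⁻ x, ∫⁻ z, ENNReal.ofReal (x + z) * phi (x + z) ∂(KM μ (n+1)) ∂μ
       = ∫⁻ x, (ENNReal.ofReal x * ∫⁻ z, phi (x + z) ∂(KM μ (n+1)) +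
           ∫⁻ z, ENNReal.ofReal z * phi (x + z) ∂(KM μ (n+1))) ∂μ := by
      refine lintegral_congr_ae ?_
      filter_upwards [hμ] with x hx
      rw [← lintegral_const_mul _ (by fun_prop), ← lintegral_add_left (by fun_prop)]
      refine lintegral_congr_ae ?_
      filter_upwards [KM_nonneg μ hμ (n+1)] with z hz
      rw [ENNReal.ofReal_add hx.le hz, add_mul]
    rw [e1, lintegral_add_left (by fun_prop)]
    have e2 : ∀ x, ∫⁻ z, ENNReal.ofReal z * phi (x + z) ∂(KM μ (n+1)) =
       ((n : ℝ≥0∞) + 1) * ∫⁻ x', ENNReal.ofReal x' * ∫⁻ z, phi (x + (x' + z)) ∂(KM μ n) ∂μ := by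
      intro x
      rw [ih (fun s => phi (x + s)) (by fun_prop)]
    simp_rw [e2]
    rw [lintegral_const_mul _ (by fun_prop), lintegral_lintegral_swap (by fun_prop)]
    have e3 : ∀ x', ∫⁻ x, ENNReal.ofReal x' * ∫⁻ z, phi (x + (x' + z)) ∂(KM μ n) ∂μ
        = ENNReal.ofReal x' * ∫⁻ z, phi (x' + z) ∂(KM μ (n+1)) := by
      intro x'
      rw [lintegral_const_mul _ (by fun_prop), KM_succ_lint μ _ (by fun_prop)]
      simp_rw [add_left_comm]
    simp_rw [e3]
    push_cast
    ring

lemma FTC_lint {g g' : ℝ → ℝ} {y : ℝ} (hy : 0 ≤ y) (hd : ∀ x, HasDerivAt g (g' x) x)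
    (hc : Continuous g') (hp : ∀ u ∈ Set.Ioc 0 y, 0 ≤ g' u) :
    ∫⁻ u in Set.Ioc 0 y, ENNReal.ofReal (g' u) = ENNReal.ofReal (g y - g 0) := by
  rw [← ofReal_integral_eq_lintegral_ofReal, ← intervalIntegral.integral_of_le hy,
    intervalIntegral.integral_eq_sub_of_hasDerivAt (fun x _ => hd x) (hc.intervalIntegrable _ _)]
  · exact (hc.intervalIntegrable 0 y).1
  · exact (ae_restrict_iff' measurableSet_Ioc).2 (Filter.Eventually.of_forall hp)

lemma KT_zero (a b : ℝ) (hb : 0 < b) (μ : Measure ℝ) [IsProbabilityMeasure μ]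
    (y : ℝ) : KT a b μ (KH a b μ 0) y = KH a b μ 1 y := by
  unfold KT
  have e : ∀ u, ENNReal.ofReal (Real.exp (-a * (y - u))) * ∫⁻ x, KH a b μ 0 (u + x) ∂μ
      = ∫⁻ x, ENNReal.ofReal (Real.exp (-a * (x + y))) ∂μ := by
    intro u
    rw [← lintegral_const_mul _ (by have := KH_meas a b μ 0; fun_prop)]
    refine lintegral_congr fun x => ?_
    simp only [KH]
    rw [← ENNReal.ofReal_mul (Real.exp_nonneg _), ← Real.exp_add]
    ring_nf
  simp_rw [e]
  simp only [KH]
  rw [KM_succ_lint μ _ (by fun_prop)]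
  simp [KM]
  rw [ENNReal.ofReal_mul hb.le]
  ring

lemma KT_succ (a b : ℝ) (hb : 0 < b) (μ : Measure ℝ) [IsProbabilityMeasure μ]
    (hμ : ∀ᵐ x ∂μ, 0 < x) (m : ℕ)
    (y : ℝ) (hy : 0 ≤ y) : KT a b μ (KH a b μ (m+1)) y = KH a b μ (m+2) y := by
  unfold KT
  have e : ∀ u ∈ Set.Ioc 0 y, ENNReal.ofReal (Real.exp (-a * (y - u))) *
        ∫⁻ x, KH a b μ (m+1) (u + x) ∂μ
      = ENNReal.ofReal (b ^ (m + 1) / ((m + 2)! : ℝ)) * ∫⁻ s, ENNReal.ofReal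
          (Real.exp (-a * (s + y)) * (((m + 2) * u + s) * (s + u) ^ m)) ∂(KM μ (m+2)) := by
    intro u hu
    set phi : ℝ → ℝ≥0∞ := fun s => ENNReal.ofReal (Real.exp (-a * (s + y)) * (s + u) ^ m) with hphi
    have hphim : Measurable phi := by fun_prop
    have hf : ENNReal.ofReal (b ^ (m + 1) / ((m + 1)! : ℝ)) =
        ENNReal.ofReal (b ^ (m + 1) / ((m + 2)! : ℝ)) * (((m+1 : ℕ) : ℝ≥0∞) + 1) := by
      have : (((m+1 : ℕ) : ℝ≥0∞) + 1) = ENNReal.ofReal ((m:ℝ) + 2) := by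
        rw [show (m:ℝ) + 2 = ((m + 1 + 1 : ℕ) : ℝ) by push_cast; ring, ENNReal.ofReal_natCast]
        push_cast; rfl
      rw [this, ← ENNReal.ofReal_mul (by positivity)]
      congr 1
      rw [Nat.factorial_succ (m+1)]
      push_cast
      field_simp
      ring
    have e1 : ENNReal.ofReal (Real.exp (-a * (y - u))) * ∫⁻ x, KH a b μ (m+1) (u + x) ∂μ
       = ENNReal.ofReal (b ^ (m + 1) / ((m + 1)! : ℝ)) * ∫⁻ x, (ENNReal.ofReal u + ENNReal.ofReal x)
          * ∫⁻ z, phi (x + z) ∂(KM μ (m+1)) ∂μ := by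
      rw [← lintegral_const_mul _ (by have := KH_meas a b μ (m+1); fun_prop),
        ← lintegral_const_mul _ (by fun_prop)]
      refine lintegral_congr_ae ?_
      filter_upwards [hμ] with x hx
      simp only [KH]
      rw [ENNReal.ofReal_mul (by positivity), ENNReal.ofReal_add hu.1.le hx.le]
      have : ∫⁻ z, phi (x + z) ∂(KM μ (m+1)) = ENNReal.ofReal (Real.exp (-a * (y - u))) *
          ∫⁻ z, ENNReal.ofReal (Real.exp (-a * (z + (u + x))) * (z + (u + x)) ^ m) ∂(KM μ (m+1)) := by
        rw [← lintegral_const_mul _ (by fun_prop)]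
        refine lintegral_congr fun z => ?_
        rw [← ENNReal.ofReal_mul (Real.exp_nonneg _), ← mul_assoc, ← Real.exp_add, hphi]
        ring_nf
      rw [this]
      ring
    rw [e1, hf, mul_assoc]
    congr 1
    simp_rw [add_mul (ENNReal.ofReal u)]
    rw [lintegral_add_left (by fun_prop), mul_add, KM_sym μ hμ (m+1) phi hphim,
      lintegral_const_mul _ (by fun_prop), ← KM_succ_lint μ _ hphim,
      ← mul_assoc, ← lintegral_const_mul _ (by fun_prop), ← lintegral_add_left (by fun_prop)]
    refine lintegral_congr_ae ?_
    filter_upwards [KM_nonneg μ hμ (m+2)] with s hs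
    have hu0 := hu.1.le
    have : (((m+1 : ℕ) : ℝ≥0∞) + 1) = ENNReal.ofReal ((m:ℝ) + 2) := by
      rw [show (m:ℝ) + 2 = ((m + 1 + 1 : ℕ) : ℝ) by push_cast; ring, ENNReal.ofReal_natCast]
      push_cast; rfl
    rw [this, ← ENNReal.ofReal_mul (by positivity), ← add_mul,
      ← ENNReal.ofReal_add (by positivity) (by positivity), hphi,
      ← ENNReal.ofReal_mul (by positivity)]
    ring_nf
  rw [setLIntegral_congr_fun measurableSet_Ioc e, lintegral_const_mul _ (by fun_prop),
    lintegral_lintegral_swap (by fun_prop)]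
  have e2 : ∫⁻ s, ∫⁻ u in Set.Ioc 0 y, ENNReal.ofReal
          (Real.exp (-a * (s + y)) * (((m + 2) * u + s) * (s + u) ^ m)) ∂volume ∂(KM μ (m+2))
      = ∫⁻ s, ENNReal.ofReal y * ENNReal.ofReal (Real.exp (-a * (s + y)) * (s + y) ^ (m+1))
        ∂(KM μ (m+2)) := by
    refine lintegral_congr_ae ?_
    filter_upwards [KM_nonneg μ hμ (m+2)] with s hs
    rw [FTC_lint (g := fun u => Real.exp (-a * (s + y)) * (u * (s + u) ^ (m + 1))) hy,
      ← ENNReal.ofReal_mul hy]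
    · congr 1; ring
    · intro u
      have h := ((hasDerivAt_id u).mul (((hasDerivAt_id u).const_add s).pow (m+1))).const_mul
        (Real.exp (-a * (s + y)))
      refine h.congr_deriv ?_
      simp only [id, Pi.pow_apply, Nat.add_sub_cancel]
      push_cast
      ring
    · fun_prop
    · intro u hu
      have := hu.1
      positivity
  rw [e2, lintegral_const_mul _ (by fun_prop), KH]
  rw [ENNReal.ofReal_mul (by positivity),
    show b ^ (m + 1 + 1) / ((m+1+1)! : ℝ) = b * (b ^ (m + 1) / ((m + 2)! : ℝ)) by ring,
    ENNReal.ofReal_mul hb.le]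
  ring

lemma KT_E (a b ρ : ℝ) (hρa : ρ ≤ a) (μ : Measure ℝ)
    (hroot : ENNReal.ofReal b * ∫⁻ x, ENNReal.ofReal (Real.exp (-ρ * x)) ∂μ
      = ENNReal.ofReal (a - ρ)) (y : ℝ) (hy : 0 ≤ y) :
    ENNReal.ofReal (Real.exp (-ρ * y)) = ENNReal.ofReal (Real.exp (-a * y)) +
      KT a b μ (fun y => ENNReal.ofReal (Real.exp (-ρ * y))) y := by
  unfold KT
  have e : ∀ u, ENNReal.ofReal b * (ENNReal.ofReal (Real.exp (-a * (y - u))) *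
      ∫⁻ x, ENNReal.ofReal (Real.exp (-ρ * (u + x))) ∂μ)
      = ENNReal.ofReal ((a - ρ) * Real.exp (-a * (y - u) - ρ * u)) := by
    intro u
    have : ∫⁻ x, ENNReal.ofReal (Real.exp (-ρ * (u + x))) ∂μ
       = ENNReal.ofReal (Real.exp (-ρ * u)) * ∫⁻ x, ENNReal.ofReal (Real.exp (-ρ * x)) ∂μ := by
      rw [← lintegral_const_mul _ (by fun_prop)]
      refine lintegral_congr fun x => ?_
      rw [← ENNReal.ofReal_mul (Real.exp_nonneg _), ← Real.exp_add]
      ring_nf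
    rw [this, ENNReal.ofReal_mul (by linarith), ← hroot,
      show -a * (y - u) - ρ * u = -a * (y - u) + -ρ * u by ring, Real.exp_add,
      ENNReal.ofReal_mul (Real.exp_nonneg _)]
    ring
  rw [← lintegral_const_mul' _ _ ENNReal.ofReal_ne_top]
  simp_rw [e]
  rw [FTC_lint (g := fun u => Real.exp (-a * (y - u) - ρ * u)) hy]
  · have hle : Real.exp (-a * y) ≤ Real.exp (-ρ * y) := by
      apply Real.exp_le_exp.2; nlinarith
    have e1 : -a * (y - y) - ρ * y = -ρ * y := by ring
    have e2 : -a * (y - 0) - ρ * 0 = -a * y := by ring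
    simp only [e1, e2]
    rw [← ENNReal.ofReal_add (Real.exp_nonneg _) (by linarith)]
    congr 1; ring
  · intro u
    have h : HasDerivAt (fun u : ℝ => -a * (y - u) - ρ * u) (a - ρ) u := by
      have := (((hasDerivAt_id u).const_sub y).const_mul (-a)).sub ((hasDerivAt_id u).const_mul ρ)
      refine this.congr_deriv ?_
      ring
    refine h.exp.congr_deriv ?_
    ring
  · fun_prop
  · intro u _
    have : 0 ≤ a - ρ := by linarith
    positivity

lemma KT_mono (a b : ℝ) (μ : Measure ℝ) (hμ : ∀ᵐ x ∂μ, 0 < x) (p g : ℝ → ℝ≥0∞)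
    (h : ∀ y, 0 ≤ y → p y ≤ g y) (y : ℝ) : KT a b μ p y ≤ KT a b μ g y := by
  unfold KT
  refine mul_le_mul_right (setLIntegral_mono' measurableSet_Ioc fun u hu => ?_) _
  refine mul_le_mul_right (lintegral_mono_ae ?_) _
  filter_upwards [hμ] with x hx
  exact h _ (by have := hu.1; positivity)

lemma KT_add (a b : ℝ) (μ : Measure ℝ) [IsProbabilityMeasure μ] (p g : ℝ → ℝ≥0∞)
    (hp : Measurable p) (y : ℝ) :
    KT a b μ (fun y => p y + g y) y = KT a b μ p y + KT a b μ g y := by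
  unfold KT
  rw [← mul_add, ← lintegral_add_left (by fun_prop)]
  congr 1
  refine lintegral_congr fun u => ?_
  rw [← mul_add, ← lintegral_add_left (by fun_prop)]

lemma KT_sum (a b : ℝ) (μ : Measure ℝ) [IsProbabilityMeasure μ] (p : ℕ → ℝ → ℝ≥0∞)
    (hp : ∀ n, Measurable (p n)) (y : ℝ) (N : ℕ) :
    KT a b μ (fun y => ∑ k ∈ Finset.range N, p k y) y
      = ∑ k ∈ Finset.range N, KT a b μ (p k) y := by
  induction N with
  | zero => simp [KT]
  | succ N ih =>
    simp_rw [Finset.sum_range_succ]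
    rw [KT_add _ _ _ _ _ (by fun_prop), ih]

lemma KT_const (a b : ℝ) (ha : 0 < a) (hb : 0 < b) (μ : Measure ℝ) [IsProbabilityMeasure μ]
    (K : ℝ≥0∞) (y : ℝ) (hy : 0 ≤ y) :
    KT a b μ (fun _ => K) y ≤ ENNReal.ofReal (b / a) * K := by
  unfold KT
  simp only [lintegral_const, measure_univ, mul_one]
  rw [lintegral_mul_const _ (by fun_prop), FTC_lint (g := fun u => a⁻¹ * Real.exp (-a * (y - u))) hy,
    ← mul_assoc, ← ENNReal.ofReal_mul hb.le]
  · refine mul_le_mul_left (ENNReal.ofReal_le_ofReal ?_) _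
    simp only [sub_self, mul_zero, Real.exp_zero, mul_one]
    rw [div_eq_mul_inv]
    have : 0 < a⁻¹ * Real.exp (-a * (y - 0)) := by positivity
    nlinarith
  · intro u
    have := (((hasDerivAt_id u).const_sub y).const_mul (-a)).exp.const_mul a⁻¹
    refine this.congr_deriv ?_
    simp only [id]
    field_simp
  · fun_prop
  · intro u _; positivity

lemma K_main (a b ρ : ℝ) (hb : 0 < b) (hab : b < a) (hρ : 0 ≤ ρ) (hρa : ρ ≤ a)
    (μ : Measure ℝ) [IsProbabilityMeasure μ] (hμ : ∀ᵐ x ∂μ, 0 < x)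
    (hroot : ENNReal.ofReal b * ∫⁻ x, ENNReal.ofReal (Real.exp (-ρ * x)) ∂μ
      = ENNReal.ofReal (a - ρ)) (y : ℝ) (hy : 0 ≤ y) :
    ∑' n, KH a b μ n y = ENNReal.ofReal (Real.exp (-ρ * y)) := by
  have ha : 0 < a := hb.trans hab
  set E : ℝ → ℝ≥0∞ := fun y => ENNReal.ofReal (Real.exp (-ρ * y)) with hE
  have hrec : ∀ N y, 0 ≤ y → ENNReal.ofReal (Real.exp (-a * y)) +
      KT a b μ (fun y => ∑ k ∈ Finset.range N, KH a b μ k y) y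
      = ∑ k ∈ Finset.range (N+1), KH a b μ k y := by
    intro N y hy
    rw [Finset.sum_range_succ', KT_sum _ _ _ _ (KH_meas a b μ), add_comm]
    congr 1
    refine Finset.sum_congr rfl fun k _ => ?_
    cases k with
    | zero => exact KT_zero a b hb μ y
    | succ k => exact KT_succ a b hb μ hμ k y hy
  have lower : ∀ N y, 0 ≤ y → ∑ k ∈ Finset.range N, KH a b μ k y ≤ E y := by
    intro N
    induction N with
    | zero => simp
    | succ N ih =>
      intro y hy
      rw [← hrec N y hy, hE]
      simp only
      rw [KT_E a b ρ hρa μ hroot y hy]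
      gcongr
      exact KT_mono a b μ hμ _ _ ih y
  have upper : ∀ N y, 0 ≤ y →
      E y ≤ ∑ k ∈ Finset.range N, KH a b μ k y + ENNReal.ofReal (b / a) ^ N := by
    intro N
    induction N with
    | zero =>
      intro y hy
      simp [hE]
      positivity
    | succ N ih =>
      intro y hy
      rw [← hrec N y hy, hE]
      simp only
      rw [KT_E a b ρ hρa μ hroot y hy, add_assoc]
      gcongr
      refine (KT_mono a b μ hμ _ _ ih y).trans ?_
      rw [KT_add _ _ _ _ _ (by have := KH_meas a b μ; fun_prop)]
      gcongr
      refine (KT_const a b ha hb μ _ y hy).trans ?_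
      rw [pow_succ']
  apply le_antisymm
  · exact ENNReal.tsum_le_of_sum_range_le fun N => lower N y hy
  · have hlim : Filter.Tendsto (fun N => ∑' n, KH a b μ n y + ENNReal.ofReal (b / a) ^ N)
        Filter.atTop (nhds (∑' n, KH a b μ n y + 0)) := by
      refine tendsto_const_nhds.add (ENNReal.tendsto_pow_atTop_nhds_zero_of_lt_one ?_)
      rw [ENNReal.ofReal_lt_one]
      exact (div_lt_one ha).2 hab
    rw [add_zero] at hlim
    refine ge_of_tendsto' hlim fun N => (upper N y hy).trans ?_
    gcongr
    exact ENNReal.sum_le_tsum _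

noncomputable def KL (F : ℝ → ℝ≥0∞) : ℕ → ℝ → ℝ≥0∞
  | 0 => F
  | n + 1 => lconvolution (KL F n) F volume

lemma KL_meas (F : ℝ → ℝ≥0∞) (hF : Measurable F) (n : ℕ) : Measurable (KL F n) := by
  induction n with
  | zero => exact hF
  | succ n ih => exact measurable_lconvolution _ ih hF

lemma KM_eq (F : ℝ → ℝ≥0∞) (hF : Measurable F) [IsProbabilityMeasure (volume.withDensity F)]
    (n : ℕ) : KM (volume.withDensity F) (n+1) = volume.withDensity (KL F n) := by
  induction n with
  | zero => unfold KM; simp [KM, KL]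
  | succ n ih =>
    unfold KM
    rw [ih, Measure.conv_comm]
    have := KL_meas F hF n
    have : IsProbabilityMeasure (volume.withDensity (KL F n)) := ih ▸ inferInstance
    exact conv_withDensity_eq_lconvolution (KL_meas F hF n) hF

lemma KL_fin (F : ℝ → ℝ≥0∞) (hF : Measurable F) [IsProbabilityMeasure (volume.withDensity F)]
    (n : ℕ) : ∀ᵐ x, KL F n x < ∞ := by
  refine ae_lt_top (KL_meas F hF n) ?_
  rw [← setLIntegral_univ, ← withDensity_apply _ MeasurableSet.univ, ← KM_eq F hF n]
  simp

lemma nconv_eq (f : ℝ → ℝ) (hf_meas : Measurable f) (hf_nonneg : ∀ x, 0 ≤ f x)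
    (hf_zero : ∀ x ≤ 0, f x = 0)
    [IsProbabilityMeasure (volume.withDensity (fun x => ENNReal.ofReal (f x)))] (n : ℕ) :
    ∀ x, nconv f n x = (KL (fun x => ENNReal.ofReal (f x)) n x).toReal ∧ (x ≤ 0 → nconv f n x = 0) := by
  set F := fun x => ENNReal.ofReal (f x) with hF
  have hFm : Measurable F := by fun_prop
  induction n with
  | zero =>
    intro x
    exact ⟨by simp [nconv, KL, hF, hf_nonneg], hf_zero x⟩
  | succ n ih =>
    intro x
    have h0 : x ≤ 0 → nconv f (n+1) x = 0 := by
      intro hx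
      unfold nconv conv
      rw [intervalIntegral.integral_of_ge hx, setIntegral_eq_zero_of_forall_eq_zero, neg_zero]
      intro y hy
      rw [hf_zero _ (by linarith [hy.1]), zero_mul]
    refine ⟨?_, h0⟩
    have e1 : nconv f (n+1) x = ∫ y, f (x - y) * nconv f n y := by
      rcases le_or_gt x 0 with hx | hx
      · rw [h0 hx]
        symm
        rw [integral_eq_zero_of_ae]
        refine Filter.Eventually.of_forall fun y => ?_
        rcases le_or_gt y 0 with h | h
        · simp [(ih y).2 h]
        · simp [hf_zero (x - y) (by linarith)]
      · conv_lhs => unfold nconv conv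
        rw [intervalIntegral.integral_of_le hx.le]
        apply setIntegral_eq_integral_of_forall_compl_eq_zero
        intro y hy
        rcases le_or_gt y 0 with h | h
        · simp [(ih y).2 h]
        · have : ¬ y ≤ x := fun h' => hy ⟨h, h'⟩
          simp [hf_zero (x - y) (by linarith)]
    rw [e1]
    have hm := KL_meas F hFm n
    simp_rw [fun y => (ih y).1]
    rw [integral_eq_lintegral_of_nonneg_ae]
    · congr 1
      simp only [KL, lconvolution]
      refine lintegral_congr_ae ?_
      filter_upwards [KL_fin F hFm n] with y hy
      rw [ENNReal.ofReal_mul (hf_nonneg _), ENNReal.ofReal_toReal hy.ne, mul_comm, neg_add_eq_sub]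
    · exact Filter.Eventually.of_forall fun y => mul_nonneg (hf_nonneg _) ENNReal.toReal_nonneg
    · exact (Measurable.aestronglyMeasurable (by fun_prop))

theorem discounted_kendall_identity
    (lam q c r ρ : ℝ) (hlam : 0 < lam) (hq : 0 < q) (hc : 0 < c)
    (hr : r ∈ Set.Ioc (0 : ℝ) 1)
    (f : ℝ → ℝ) (hf_meas : Measurable f) (hf_nonneg : ∀ x, 0 ≤ f x)
    (hf_zero : ∀ x ≤ 0, f x = 0) (hf_cont : ContinuousOn f (Set.Ioi 0))
    (hf_int : IntegrableOn f (Set.Ioi 0))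
    (hf_one : ∫ x in Set.Ioi (0 : ℝ), f x = 1)
    (hρ_nonneg : 0 ≤ ρ)
    (hρ_root : c * ρ - (lam + q) + lam * r * laplace f ρ = 0)
    (hρ_unique : ∀ s, 0 ≤ s → c * s - (lam + q) + lam * r * laplace f s = 0 → s = ρ)
    (y : ℝ) (hy : 0 < y) :
    Real.exp (-(lam + q) * y / c)
      + (∑' k : ℕ, r ^ (k + 1) * lam ^ (k + 1) / (Nat.factorial (k + 1) : ℝ) * y *
          ∫ t in Set.Ioi (y / c),
            Real.exp (-q * t) * t ^ k * Real.exp (-lam * t) * nconv f k (c * t - y))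
      = Real.exp (-ρ * y) := by
  obtain ⟨hr0, hr1⟩ := hr
  set F : ℝ → ℝ≥0∞ := fun x => ENNReal.ofReal (f x) with hF
  have hFm : Measurable F := by fun_prop
  set μ := volume.withDensity F with hμdef
  have hset : ∀ g : ℝ → ℝ, ∫ x in Set.Ioi (0:ℝ), g x * f x = ∫ x, g x * f x := by
    intro g
    apply setIntegral_eq_integral_of_forall_compl_eq_zero
    intro x hx
    rw [hf_zero x (not_lt.1 hx), mul_zero]
  have hfi : Integrable f := by
    rw [← integrableOn_univ, ← Set.Iic_union_Ioi (a := (0:ℝ))]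
    refine IntegrableOn.union ?_ hf_int
    exact (integrableOn_zero).congr_fun (fun x hx => (hf_zero x hx).symm) measurableSet_Iic
  have hone : ∫ x, f x = 1 := by
    have := hset (fun _ => 1)
    simp only [one_mul] at this
    rw [← this, hf_one]
  have hprob : IsProbabilityMeasure μ := by
    constructor
    rw [hμdef, withDensity_apply _ MeasurableSet.univ, setLIntegral_univ,
      ← ofReal_integral_eq_lintegral_ofReal hfi (Filter.Eventually.of_forall hf_nonneg), hone,
      ENNReal.ofReal_one]
  have hμ : ∀ᵐ x ∂μ, 0 < x := by
    rw [hμdef, ae_withDensity_iff hFm]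
    refine Filter.Eventually.of_forall fun x hx => ?_
    by_contra h
    exact hx (by simp [hF, hf_zero x (not_lt.1 h)])
  have hint : ∀ g : ℝ → ℝ, ∫ x, g x ∂μ = ∫ x, g x * f x := by
    intro g
    rw [hμdef, integral_withDensity_eq_integral_toReal_smul hFm (by simp [hF])]
    simp [hF, hf_nonneg, mul_comm]
  have hsub : ∀ G : ℝ → ℝ, ∫ t, G (c * t - y) = c⁻¹ * ∫ x, G x := by
    intro G
    have h := Measure.integral_comp_mul_left (fun w => G (w - y)) c
    rw [integral_sub_right_eq_self G, abs_of_pos (by positivity), smul_eq_mul] at h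
    exact h
  set a := (lam + q) / c with ha
  set b := lam * r / c with hb
  have hb0 : 0 < b := by positivity
  have hab : b < a := by
    rw [ha, hb]; gcongr; nlinarith
  have hlap : laplace f ρ = ∫ x, Real.exp (-ρ * x) ∂μ := by
    rw [hint, ← hset, laplace]
  have hlap0 : 0 ≤ laplace f ρ := by rw [hlap]; positivity
  have hroot' : b * laplace f ρ = a - ρ := by
    rw [ha, hb]; field_simp; linarith
  have hρa : ρ ≤ a := by nlinarith [mul_nonneg hb0.le hlap0]
  have hexpint : Integrable (fun x => Real.exp (-ρ * x)) μ := by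
    refine Integrable.of_bound (C := 1) (by fun_prop) ?_
    filter_upwards [hμ] with x hx
    rw [Real.norm_eq_abs, abs_of_pos (Real.exp_pos _), Real.exp_le_one_iff]
    nlinarith
  have hmain := K_main a b ρ hb0 hab hρ_nonneg hρa μ hμ (by
    rw [← ofReal_integral_eq_lintegral_ofReal hexpint
      (Filter.Eventually.of_forall fun x => Real.exp_nonneg _), ← hlap,
      ← ENNReal.ofReal_mul hb0.le, hroot']) y hy.le
  have hne : ∀ n, KH a b μ n y ≠ ∞ :=
    fun n => ne_top_of_le_ne_top (hmain ▸ ENNReal.ofReal_ne_top) (ENNReal.le_tsum n)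
  have hsum := congrArg ENNReal.toReal hmain
  rw [ENNReal.toReal_ofReal (Real.exp_nonneg _), ENNReal.tsum_toReal_eq hne,
    Summable.tsum_eq_zero_add (ENNReal.summable_toReal (hmain ▸ ENNReal.ofReal_ne_top))] at hsum
  rw [← hsum]
  congr 1
  · simp only [KH]
    rw [ENNReal.toReal_ofReal (Real.exp_nonneg _), ha]
    congr 1; ring
  · refine tsum_congr fun k => ?_
    have hn : ∀ x, nconv f k x = (KL F k x).toReal ∧ (x ≤ 0 → nconv f k x = 0) := nconv_eq f hf_meas hf_nonneg hf_zero k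
    simp only [KH]
    rw [ENNReal.toReal_mul, ENNReal.toReal_ofReal (by positivity),
      ← integral_eq_lintegral_of_nonneg_ae _ (by fun_prop)]
    · rw [KM_eq F hFm k, integral_withDensity_eq_integral_toReal_smul (KL_meas F hFm k)
        (KL_fin F hFm k)]
      rw [setIntegral_eq_integral_of_forall_compl_eq_zero (by
        intro t ht
        have : t ≤ y / c := not_lt.1 ht
        rw [(hn _).2 (by rw [le_div_iff₀ hc] at this; linarith), mul_zero])]
      have e1 : ∀ t, Real.exp (-q * t) * t ^ k * Real.exp (-lam * t) * nconv f k (c * t - y)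
          = (fun x => (c⁻¹) ^ k * ((KL F k x).toReal •
            (Real.exp (-a * (x + y)) * (x + y) ^ k))) (c * t - y) := by
        intro t
        simp only [sub_add_cancel, smul_eq_mul]
        rw [(hn _).1, show -a * (c * t) = -q * t + -lam * t by rw [ha]; field_simp; ring,
          Real.exp_add, mul_pow, inv_pow]
        field_simp
      rw [integral_congr_ae (Filter.Eventually.of_forall e1)]
      rw [hsub (fun x => (c⁻¹) ^ k * ((KL F k x).toReal •
          (Real.exp (-a * (x + y)) * (x + y) ^ k))), integral_const_mul, hb, div_pow, mul_pow,
        inv_pow]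
      field_simp
      ring
    · filter_upwards [KM_nonneg μ hμ (k+1)] with x hx
      positivity
end

section
/- Let μ, λ, c, q > 0, r ∈ (0,1], d > 0 and x ∈ ℝ. Then ∫_0^∞ μ e^{−μ(y+x)} [ e^{−(λ+q) y / c} 1_{\{y ≤ c d\}} + ∫_0^d e^{−q t} Σ_{k=1}^∞ r^k (λ^k μ^k y)/(k!(k−1)!) · t^{k−1} (c t − y)^{k−1} 1_{\{c t > y\}} e^{−(λ+μ c) t} e^{μ y} dt ] dy = e^{−μ x} · Σ_{k=0}^∞ ( r^k λ^k (μ c)^{k+1} ) / ( k! (k+1)! ) ∫_0^d t^{2k} e^{−(λ+q+μ c) t} dt. -/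
open MeasureTheory

lemma wd_swap (s T : Set ℝ) (hs : MeasurableSet s) (hT : MeasurableSet T)
    (hs' : volume s ≠ ⊤) (hT' : volume T ≠ ⊤) (F : ℕ → ℝ → ℝ → ℝ)
    (hF : ∀ k, Measurable (Function.uncurry (F k))) (b : ℕ → ℝ) (hb : Summable b)
    (hFb : ∀ k, ∀ y ∈ s, ∀ t ∈ T, ‖F k y t‖ ≤ b k) :
    IntegrableOn (fun y => ∫ t in T, ∑' k, F k y t) s ∧
    HasSum (fun k => ∫ t in T, ∫ y in s, F k y t) (∫ y in s, ∫ t in T, ∑' k, F k y t) := by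
  have : IsFiniteMeasure (volume.restrict s) := ⟨by simpa using hs'.lt_top⟩
  have : IsFiniteMeasure (volume.restrict T) := ⟨by simpa using hT'.lt_top⟩
  set P := (volume.restrict s).prod (volume.restrict T) with hP
  have hae : ∀ᵐ z ∂P, z ∈ s ×ˢ T := by
    rw [hP, Measure.prod_restrict]
    exact ae_restrict_mem (hs.prod hT)
  have hbound : ∀ k, ∀ᵐ z ∂P, ‖Function.uncurry (F k) z‖ ≤ b k := by
    intro k
    filter_upwards [hae] with z hz
    exact hFb k z.1 hz.1 z.2 hz.2
  have hint : ∀ k, Integrable (Function.uncurry (F k)) P := fun k =>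
    Integrable.of_bound (hF k).aestronglyMeasurable (b k) (hbound k)
  have hsum : Summable fun k => ∫ z, ‖Function.uncurry (F k) z‖ ∂P := by
    refine Summable.of_nonneg_of_le (fun k => integral_nonneg fun _ => norm_nonneg _)
      (fun k => ?_) (hb.mul_left (P.real Set.univ))
    calc ∫ z, ‖Function.uncurry (F k) z‖ ∂P ≤ ∫ z, b k ∂P :=
          integral_mono_ae (hint k).norm (integrable_const _) (hbound k)
      _ = _ := by simp
  have hG : Integrable (fun z : ℝ × ℝ => ∑' k, Function.uncurry (F k) z) P := by
    refine Integrable.of_bound (Measurable.tsum hF).aestronglyMeasurable (∑' k, b k) ?_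
    filter_upwards [hae] with z hz
    exact tsum_of_norm_bounded hb.hasSum (fun k => hFb k z.1 hz.1 z.2 hz.2)
  refine ⟨hG.integral_prod_left, ?_⟩
  have h := hasSum_integral_of_summable_integral_norm hint hsum
  rw [integral_prod _ hG] at h
  have h2 : (fun k => ∫ t in T, ∫ y in s, F k y t)
      = fun k => ∫ z, Function.uncurry (F k) z ∂P := by
    funext k
    rw [integral_prod_symm _ (hint k)]
    rfl
  rw [h2]
  exact h

lemma wd_beta (a : ℝ) (k : ℕ) :
    ∫ y in (0:ℝ)..a, y * (a - y) ^ k = a ^ (k + 2) / ((k + 1) * (k + 2)) := by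
  have h := intervalIntegral.integral_comp_sub_left (a := 0) (b := a)
    (fun u : ℝ => (a - u) * u ^ k) a
  simp only [sub_sub_cancel, sub_self, sub_zero] at h
  rw [h]
  have : (fun u : ℝ => (a - u) * u ^ k) = fun u => a * u ^ k - u ^ (k + 1) := by
    funext u; ring
  rw [this, intervalIntegral.integral_sub (by apply Continuous.intervalIntegrable; fun_prop)
    (by apply Continuous.intervalIntegrable; fun_prop), intervalIntegral.integral_const_mul,
    integral_pow, integral_pow]
  push_cast
  have h1 : (k:ℝ) + 1 ≠ 0 := by positivity
  have h2 : (k:ℝ) + 2 ≠ 0 := by positivity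
  have h3 : (k:ℝ) + 1 + 1 ≠ 0 := by positivity
  field_simp
  ring

lemma wd_inner (c d t : ℝ) (hc : 0 < c) (ht : t ∈ Set.Ioc 0 d) (k : ℕ) :
    ∫ y in Set.Ioc 0 (c * d), y * ((c * t - y) ^ k * (if y < c * t then 1 else 0))
      = (c * t) ^ (k + 2) / ((k + 1) * (k + 2)) := by
  have hct : 0 ≤ c * t := by have := ht.1; positivity
  rw [← wd_beta, intervalIntegral.integral_of_le hct, integral_Ioc_eq_integral_Ioo (y := c * t)]
  rw [setIntegral_eq_of_subset_of_forall_sdiff_eq_zero (s := Set.Ioo 0 (c * t)) measurableSet_Ioc]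
  · refine setIntegral_congr_fun measurableSet_Ioo fun y hy => ?_
    simp [hy.2]
  · intro y hy
    exact ⟨hy.1, hy.2.le.trans (by gcongr; exact ht.2)⟩
  · intro y hy
    have : ¬ y < c * t := fun h => hy.2 ⟨hy.1.1, h⟩
    simp [this]

lemma wd_first (μ lam c q d : ℝ) (hc : 0 < c) (hd : 0 < d) :
    ∫ y in Set.Ioc 0 (c * d), μ * Real.exp (-μ * y) * Real.exp (-(lam + q) * y / c)
     = μ * c * ∫ t in (0 : ℝ)..d, Real.exp (-(lam + q + μ * c) * t) := by
  rw [← intervalIntegral.integral_of_le (by positivity)]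
  have h := intervalIntegral.mul_integral_comp_mul_left (a := 0) (b := d)
    (f := fun y => μ * Real.exp (-μ * y) * Real.exp (-(lam + q) * y / c)) (c := c)
  rw [mul_zero] at h
  rw [← h, ← intervalIntegral.integral_const_mul, ← intervalIntegral.integral_const_mul]
  refine intervalIntegral.integral_congr fun t _ => ?_
  have e : Real.exp (-(lam + q + μ * c) * t)
      = Real.exp (-μ * (c * t)) * Real.exp (-(lam + q) * (c * t) / c) := by
    rw [← Real.exp_add]
    congr 1
    field_simp
    ring
  simp only [e]
  ring

/-- Closed-form evaluation of
`w_d(x) = ∫_0^∞ [∫_0^d e^{-qt} Σ_{k≥0} r^k v_y(k,t) dt] f(y+x) dy` in the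
exponential-claim case `f(x) = μ e^{-μ x}`: it equals `e^{-μ x} u(d)` with
`u(d) = Σ_{k≥0} r^k λ^k (μ c)^{k+1} / (k!(k+1)!) ∫_0^d t^{2k} e^{-(λ+q+μc)t} dt`. -/
theorem wd_exponential_claims
    (μ lam c q r d : ℝ) (hμ : 0 < μ) (hlam : 0 < lam) (hc : 0 < c) (hq : 0 < q)
    (hr : r ∈ Set.Ioc (0 : ℝ) 1) (hd : 0 < d) (x : ℝ) :
    (∫ y in Set.Ioi (0 : ℝ), μ * Real.exp (-μ * (y + x)) *
        ((if y ≤ c * d then Real.exp (-(lam + q) * y / c) else 0)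
          + ∫ t in (0 : ℝ)..d, Real.exp (-q * t) *
              ∑' k : ℕ,
                r ^ (k + 1) * lam ^ (k + 1) * μ ^ (k + 1) * y /
                    ((Nat.factorial (k + 1) : ℝ) * (Nat.factorial k : ℝ))
                  * t ^ k * (c * t - y) ^ k * (if y < c * t then 1 else 0)
                  * Real.exp (-(lam + μ * c) * t) * Real.exp (μ * y)))
      = Real.exp (-μ * x) *
          ∑' k : ℕ,
            r ^ k * lam ^ k * (μ * c) ^ (k + 1) /
                ((Nat.factorial k : ℝ) * (Nat.factorial (k + 1) : ℝ))
              * ∫ t in (0 : ℝ)..d, t ^ (2 * k) * Real.exp (-(lam + q + μ * c) * t) := by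
  obtain ⟨hr0, hr1⟩ := hr
  set K : ℕ → ℝ := fun k => r ^ (k + 1) * lam ^ (k + 1) * μ ^ (k + 1) /
                    ((Nat.factorial (k + 1) : ℝ) * (Nat.factorial k : ℝ)) with hK
  have hK0 : ∀ k, 0 ≤ K k := fun k => by simp only [hK]; positivity
  set F : ℕ → ℝ → ℝ → ℝ := fun k y t => K k * (t ^ k * Real.exp (-(lam + q + μ * c) * t)) *
    (y * ((c * t - y) ^ k * (if y < c * t then 1 else 0))) with hF
  have hFm : ∀ k, Measurable (Function.uncurry (F k)) := by
    intro k
    have hset : MeasurableSet {z : ℝ × ℝ | z.1 < c * z.2} :=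
      measurableSet_lt (by fun_prop) (by fun_prop)
    have hi : Measurable (fun z : ℝ × ℝ => if z.1 < c * z.2 then (1:ℝ) else 0) :=
      Measurable.ite hset measurable_const measurable_const
    simp only [hF, Function.uncurry_def]
    fun_prop
  set b : ℕ → ℝ := fun k => (r * lam * μ * (c * d)) *
    ((r * lam * μ * d * (c * d)) ^ k / (Nat.factorial k : ℝ)) with hb
  have hbs : Summable b := (Real.summable_pow_div_factorial _).mul_left _
  have hFb : ∀ k, ∀ y ∈ Set.Ioc 0 (c * d), ∀ t ∈ Set.Ioc 0 d, ‖F k y t‖ ≤ b k := by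
    rintro k y ⟨hy0, hy1⟩ t ⟨ht0, ht1⟩
    have hKb : K k ≤ r ^ (k + 1) * lam ^ (k + 1) * μ ^ (k + 1) / (Nat.factorial k : ℝ) := by
      simp only [hK]
      have h1 : (1:ℝ) ≤ (Nat.factorial (k+1) : ℝ) := by exact_mod_cast Nat.factorial_pos _
      have h2 : (0:ℝ) < (Nat.factorial k : ℝ) := by exact_mod_cast Nat.factorial_pos _
      gcongr
      nlinarith
    have hE : Real.exp (-(lam + q + μ * c) * t) ≤ 1 := by
      apply Real.exp_le_one_iff.2
      have : 0 ≤ (lam + q + μ * c) * t := by positivity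
      linarith
    by_cases h : y < c * t
    · have hz : 0 ≤ c * t - y := by linarith
      have hz1 : c * t - y ≤ c * d := by nlinarith
      have e1 : F k y t = K k * (t ^ k * Real.exp (-(lam + q + μ * c) * t)) *
        (y * (c * t - y) ^ k) := by simp [hF, h]
      have h0 := hK0 k
      rw [e1, Real.norm_of_nonneg (by positivity)]
      calc _ ≤ (r ^ (k + 1) * lam ^ (k + 1) * μ ^ (k + 1) / (Nat.factorial k : ℝ)) *
            (d ^ k * 1) * ((c * d) * (c * d) ^ k) := by gcongr
        _ = b k := by simp only [hb, mul_pow]; ring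
    · have e1 : F k y t = 0 := by simp [hF, h]
      rw [e1, norm_zero]
      simp only [hb]; positivity
  obtain ⟨hI, hS⟩ := wd_swap (Set.Ioc 0 (c * d)) (Set.Ioc 0 d) measurableSet_Ioc measurableSet_Ioc
    (by simp) (by simp) F hFm b hbs hFb
  -- rewrite the integrand
  have hlhs : ∀ y, μ * Real.exp (-μ * (y + x)) *
        ((if y ≤ c * d then Real.exp (-(lam + q) * y / c) else 0)
          + ∫ t in (0 : ℝ)..d, Real.exp (-q * t) *
              ∑' k : ℕ,
                r ^ (k + 1) * lam ^ (k + 1) * μ ^ (k + 1) * y /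
                    ((Nat.factorial (k + 1) : ℝ) * (Nat.factorial k : ℝ))
                  * t ^ k * (c * t - y) ^ k * (if y < c * t then 1 else 0)
                  * Real.exp (-(lam + μ * c) * t) * Real.exp (μ * y))
      = Real.exp (-μ * x) * (μ * Real.exp (-μ * y) *
          (if y ≤ c * d then Real.exp (-(lam + q) * y / c) else 0) +
          μ * ∫ t in Set.Ioc 0 d, ∑' k, F k y t) := by
    intro y
    have e : (∫ t in (0 : ℝ)..d, Real.exp (-q * t) *
              ∑' k : ℕ,
                r ^ (k + 1) * lam ^ (k + 1) * μ ^ (k + 1) * y /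
                    ((Nat.factorial (k + 1) : ℝ) * (Nat.factorial k : ℝ))
                  * t ^ k * (c * t - y) ^ k * (if y < c * t then 1 else 0)
                  * Real.exp (-(lam + μ * c) * t) * Real.exp (μ * y))
        = Real.exp (μ * y) * ∫ t in Set.Ioc 0 d, ∑' k, F k y t := by
      rw [intervalIntegral.integral_of_le hd.le, ← integral_const_mul]
      congr 1
      funext t
      rw [← tsum_mul_left, ← tsum_mul_left]
      congr 1
      funext k
      have : Real.exp (-(lam + q + μ * c) * t)
          = Real.exp (-q * t) * Real.exp (-(lam + μ * c) * t) := by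
        rw [← Real.exp_add]; congr 1; ring
      simp only [hF, hK, this]
      ring
    rw [e]
    have e1 : Real.exp (-μ * (y + x)) = Real.exp (-μ * x) * Real.exp (-μ * y) := by
      rw [← Real.exp_add]; congr 1; ring
    have e2 : Real.exp (-μ * y) * Real.exp (μ * y) = 1 := by
      rw [← Real.exp_add]; simp
    rw [e1]
    linear_combination (μ * Real.exp (-μ * x) * ∫ t in Set.Ioc 0 d, ∑' k, F k y t) * e2
  simp_rw [hlhs]
  rw [integral_const_mul]
  congr 1
  rw [setIntegral_eq_of_subset_of_forall_sdiff_eq_zero (s := Set.Ioc 0 (c * d)) measurableSet_Ioi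
    (fun y hy => hy.1)]
  swap
  · intro y hy
    have hy1 : ¬ y ≤ c * d := fun h => hy.2 ⟨hy.1, h⟩
    have h0 : ∫ t in Set.Ioc 0 d, ∑' k, F k y t = 0 := by
      rw [setIntegral_congr_fun (g := fun _ => (0:ℝ)) measurableSet_Ioc, integral_zero]
      intro t ht
      have : ¬ y < c * t := by
        have := mul_le_mul_of_nonneg_left ht.2 hc.le
        intro h; linarith
      simp [hF, this]
    rw [h0]; simp [hy1]
  have hA : ∫ y in Set.Ioc 0 (c * d), (μ * Real.exp (-μ * y) *
          (if y ≤ c * d then Real.exp (-(lam + q) * y / c) else 0) +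
          μ * ∫ t in Set.Ioc 0 d, ∑' k, F k y t)
      = ∫ y in Set.Ioc 0 (c * d), (μ * Real.exp (-μ * y) * Real.exp (-(lam + q) * y / c) +
          μ * ∫ t in Set.Ioc 0 d, ∑' k, F k y t) := by
    refine setIntegral_congr_fun measurableSet_Ioc fun y hy => ?_
    simp [hy.2]
  rw [hA, integral_add ((by fun_prop : Continuous fun y : ℝ => μ * Real.exp (-μ * y) *
    Real.exp (-(lam + q) * y / c)).integrableOn_Ioc) (hI.const_mul μ), wd_first μ lam c q d hc hd,
    integral_const_mul]
  have hterm : ∀ k, μ * ∫ t in Set.Ioc 0 d, ∫ y in Set.Ioc 0 (c * d), F k y t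
      = r ^ (k+1) * lam ^ (k+1) * (μ * c) ^ (k + 1 + 1) /
                ((Nat.factorial (k+1) : ℝ) * (Nat.factorial (k + 1 + 1) : ℝ))
              * ∫ t in (0 : ℝ)..d, t ^ (2 * (k+1)) * Real.exp (-(lam + q + μ * c) * t) := by
    intro k
    rw [intervalIntegral.integral_of_le hd.le, ← integral_const_mul, ← integral_const_mul]
    refine setIntegral_congr_fun measurableSet_Ioc fun t ht => ?_
    simp only [hF]
    rw [integral_const_mul, wd_inner c d t hc ht k]
    simp only [hK]
    rw [Nat.factorial_succ (k+1), Nat.factorial_succ k]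
    have h2 : (Nat.factorial k : ℝ) ≠ 0 := by exact_mod_cast Nat.factorial_ne_zero _
    push_cast
    have h3 : (k:ℝ) + 1 ≠ 0 := by positivity
    have h4 : (k:ℝ) + 2 ≠ 0 := by positivity
    have h5 : (k:ℝ) + 1 + 1 = k + 2 := by ring
    rw [h5]
    field_simp
    ring
  have hS2 := hS.mul_left μ
  simp_rw [hterm] at hS2
  have hS3 := (hasSum_nat_add_iff (f := fun k : ℕ => r ^ k * lam ^ k * (μ * c) ^ (k + 1) /
                ((Nat.factorial k : ℝ) * (Nat.factorial (k + 1) : ℝ))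
              * ∫ t in (0 : ℝ)..d, t ^ (2 * k) * Real.exp (-(lam + q + μ * c) * t)) 1).1 hS2
  rw [hS3.tsum_eq]
  simp
  ring
end

section
/- Let λ, c, μ > 0, r ∈ (0,1] and ρ ≥ 0, let f(x) = μ e^{−μ x} for x > 0 (and 0 otherwise), and let ζ(x) = e^{ρ x} for x ≥ 0 (and 0 for x < 0). Then for every x ≥ 0, Σ_{n=0}^∞ (λ r / c)ⁿ ((T_ρ f)^{*n} * ζ)(x) = e^{ρ x} + Σ_{n=1}^∞ (λ r μ)ⁿ / ( (n−1)! cⁿ (ρ+μ)ⁿ ) · e^{ρ x} ∫_0^x y^{n−1} e^{−(ρ+μ) y} dy, where the n = 0 term on the left is ζ(x), both series converging absolutely. -/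
open MeasureTheory

theorem dickson_exp (μ ρ : ℝ) (hμ : 0 < μ) (hρ : 0 ≤ ρ) (f : ℝ → ℝ)
    (hf : ∀ x, f x = if 0 < x then μ * Real.exp (-μ * x) else 0) (x : ℝ) (hx : 0 ≤ x) :
    dickson ρ f x = μ / (ρ + μ) * Real.exp (-μ * x) := by
  have hp : 0 < ρ + μ := by linarith
  unfold dickson
  have h1 : ∫ u in Set.Ioi x, Real.exp (-ρ * (u - x)) * f u
      = ∫ u in Set.Ioi x, (μ * Real.exp (ρ * x)) * Real.exp (-(ρ + μ) * u) := by
    refine setIntegral_congr_fun measurableSet_Ioi ?_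
    intro u hu
    have hu' : 0 < u := lt_of_le_of_lt hx hu
    simp only [hf, if_pos hu']
    rw [mul_left_comm, ← Real.exp_add, mul_assoc, ← Real.exp_add]
    congr 2
    ring
  rw [h1, integral_const_mul, integral_exp_mul_Ioi (by linarith) x]
  have h2 : Real.exp (-μ * x) = Real.exp (ρ * x) * Real.exp (-(ρ + μ) * x) := by
    rw [← Real.exp_add]; congr 1; ring
  rw [h2]
  field_simp

theorem nconv_exp (K μ : ℝ) (g : ℝ → ℝ)
    (hg : ∀ x, 0 ≤ x → g x = K * Real.exp (-μ * x)) (n : ℕ) :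
    ∀ x, 0 ≤ x → nconv g n x
      = K ^ (n + 1) / (Nat.factorial n : ℝ) * (x ^ n * Real.exp (-μ * x)) := by
  induction n with
  | zero => intro x hx; simp [nconv, hg x hx]
  | succ n ih =>
    intro x hx
    have h1 : nconv g (n + 1) x = ∫ y in (0 : ℝ)..x,
        (K ^ (n + 2) / (Nat.factorial n : ℝ) * Real.exp (-μ * x)) * y ^ n := by
      show (∫ y in (0 : ℝ)..x, g (x - y) * nconv g n y) = _
      refine intervalIntegral.integral_congr ?_
      intro y hy
      rw [Set.uIcc_of_le hx] at hy
      simp only [hg (x - y) (by linarith [hy.2]), ih y hy.1]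
      have h2 : Real.exp (-μ * x) = Real.exp (-μ * (x - y)) * Real.exp (-μ * y) := by
        rw [← Real.exp_add]; congr 1; ring
      rw [h2]; ring
    rw [h1, intervalIntegral.integral_const_mul, integral_pow, Nat.factorial_succ]
    have : (Nat.factorial n : ℝ) ≠ 0 := by positivity
    push_cast
    have h3 : (n : ℝ) + 1 ≠ 0 := by positivity
    field_simp
    simp

theorem conv_exp (K μ ρ : ℝ) (g ζ : ℝ → ℝ)
    (hg : ∀ x, 0 ≤ x → g x = K * Real.exp (-μ * x))
    (hζ : ∀ x, ζ x = if 0 ≤ x then Real.exp (ρ * x) else 0)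
    (n : ℕ) (x : ℝ) (hx : 0 ≤ x) :
    conv (nconv g n) ζ x = K ^ (n + 1) / (Nat.factorial n : ℝ) * Real.exp (ρ * x) *
      ∫ y in (0 : ℝ)..x, y ^ n * Real.exp (-(ρ + μ) * y) := by
  have h0 := intervalIntegral.integral_comp_sub_left (a := 0) (b := x)
    (fun y => nconv g n y * ζ (x - y)) x
  simp only [sub_sub_cancel, sub_self, sub_zero] at h0
  unfold conv
  rw [h0, ← intervalIntegral.integral_const_mul]
  refine intervalIntegral.integral_congr ?_
  intro y hy
  rw [Set.uIcc_of_le hx] at hy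
  have hxy : 0 ≤ x - y := by linarith [hy.2]
  simp only [nconv_exp K μ g hg n y hy.1, hζ, if_pos hxy]
  have h2 : Real.exp (-μ * y) * Real.exp (ρ * (x - y))
      = Real.exp (ρ * x) * Real.exp (-(ρ + μ) * y) := by
    rw [← Real.exp_add, ← Real.exp_add]; congr 1; ring
  linear_combination (K ^ (n + 1) / (Nat.factorial n : ℝ) * y ^ n) * h2

/-- Explicit evaluation of the Neumann series
`Σ_{n≥0} (λr/c)ⁿ ((T_ρ f)^{*n} * ζ)(x)` for exponential claims
`f(x) = μ e^{-μx}` and `ζ(x) = e^{ρx}`; both series converge absolutely. -/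
theorem neumann_series_exponential_claims
    (lam c μ r ρ : ℝ) (hlam : 0 < lam) (hc : 0 < c) (hμ : 0 < μ)
    (hr : r ∈ Set.Ioc (0 : ℝ) 1) (hρ : 0 ≤ ρ)
    (f ζ : ℝ → ℝ)
    (hf : ∀ x, f x = if 0 < x then μ * Real.exp (-μ * x) else 0)
    (hζ : ∀ x, ζ x = if 0 ≤ x then Real.exp (ρ * x) else 0)
    (x : ℝ) (hx : 0 ≤ x) :
    (Summable fun n : ℕ =>
      |(lam * r / c) ^ (n + 1) * conv (nconv (dickson ρ f) n) ζ x|) ∧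
    (Summable fun n : ℕ =>
      |(lam * r * μ) ^ (n + 1) /
          ((Nat.factorial n : ℝ) * c ^ (n + 1) * (ρ + μ) ^ (n + 1))
        * Real.exp (ρ * x) * ∫ y in (0 : ℝ)..x, y ^ n * Real.exp (-(ρ + μ) * y)|) ∧
    ζ x + (∑' n : ℕ, (lam * r / c) ^ (n + 1) * conv (nconv (dickson ρ f) n) ζ x)
      = Real.exp (ρ * x)
        + ∑' n : ℕ,
            (lam * r * μ) ^ (n + 1) /
                ((Nat.factorial n : ℝ) * c ^ (n + 1) * (ρ + μ) ^ (n + 1))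
              * Real.exp (ρ * x)
              * ∫ y in (0 : ℝ)..x, y ^ n * Real.exp (-(ρ + μ) * y) := by
  have hp : 0 < ρ + μ := by linarith
  have key : ∀ n : ℕ, (lam * r / c) ^ (n + 1) * conv (nconv (dickson ρ f) n) ζ x
      = (lam * r * μ) ^ (n + 1) /
          ((Nat.factorial n : ℝ) * c ^ (n + 1) * (ρ + μ) ^ (n + 1))
        * Real.exp (ρ * x) * ∫ y in (0 : ℝ)..x, y ^ n * Real.exp (-(ρ + μ) * y) := by
    intro n
    rw [conv_exp (μ / (ρ + μ)) μ ρ _ ζ (dickson_exp μ ρ hμ hρ f hf) hζ n x hx]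
    have h : (lam * r / c) ^ (n + 1) * ((μ / (ρ + μ)) ^ (n + 1) / (Nat.factorial n : ℝ))
        = (lam * r * μ) ^ (n + 1) /
          ((Nat.factorial n : ℝ) * c ^ (n + 1) * (ρ + μ) ^ (n + 1)) := by
      rw [div_pow, div_pow, mul_pow (lam * r) μ]
      field_simp
    rw [← h]; ring
  have hS : Summable fun n : ℕ =>
      |(lam * r * μ) ^ (n + 1) /
          ((Nat.factorial n : ℝ) * c ^ (n + 1) * (ρ + μ) ^ (n + 1))
        * Real.exp (ρ * x) * ∫ y in (0 : ℝ)..x, y ^ n * Real.exp (-(ρ + μ) * y)| := by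
    set A : ℝ := lam * r * μ / (c * (ρ + μ)) with hA
    have hA0 : 0 ≤ A := by
      have := hr.1
      positivity
    have hb := (Real.summable_pow_div_factorial (A * x)).mul_left (A * x * Real.exp (ρ * x))
    refine Summable.of_nonneg_of_le (fun _ => abs_nonneg _) (fun n => ?_) hb
    have hI : |∫ y in (0 : ℝ)..x, y ^ n * Real.exp (-(ρ + μ) * y)| ≤ x ^ n * x := by
      have := intervalIntegral.norm_integral_le_of_norm_le_const (a := 0) (b := x)
        (f := fun y : ℝ => y ^ n * Real.exp (-(ρ + μ) * y)) (C := x ^ n) (by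
          intro y hy
          rw [Set.uIoc_of_le hx] at hy
          have hy0 : 0 ≤ y := hy.1.le
          rw [Real.norm_of_nonneg (by positivity)]
          have h1 : Real.exp (-(ρ + μ) * y) ≤ 1 := Real.exp_le_one_iff.mpr (by nlinarith)
          have h2 : y ^ n ≤ x ^ n := pow_le_pow_left₀ hy0 hy.2 n
          calc y ^ n * Real.exp (-(ρ + μ) * y) ≤ y ^ n * 1 := by gcongr
            _ ≤ x ^ n := by simpa using h2)
      simpa [abs_of_nonneg hx] using this
    have hE : (lam * r * μ) ^ (n + 1) /
          ((Nat.factorial n : ℝ) * c ^ (n + 1) * (ρ + μ) ^ (n + 1))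
          = A ^ (n + 1) / (Nat.factorial n : ℝ) := by
      rw [hA, div_pow, mul_pow c]
      field_simp
    rw [hE, abs_mul, abs_of_nonneg (by positivity)]
    calc _ ≤ A ^ (n + 1) / (Nat.factorial n : ℝ) * Real.exp (ρ * x) * (x ^ n * x) := by gcongr
      _ = _ := by rw [mul_pow]; ring
  refine ⟨?_, hS, ?_⟩
  · simpa only [key] using hS
  · simp only [key]
    rw [hζ, if_pos hx]
end
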